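/- (Theorem 1.2, first formula.) Let n ≥ 3 be a natural number. The genus-zero Hurwitz number h_{2^1,2^1} with two degenerate branch points, each of reduced ramification type 2^1 (i.e., two permutations each of cycle type (3,1^{n-3})) and m = 2n−6 simple branch points satisfies h_{2^1,2^1} = (3/4)·(27n^2 − 137n + 180)·((2n−6)!/(n−3)!)·n^{n−6}. -/

import Mathlib

open Equiv

/-!
Encode the orbits of a factorization of a permutation `σ` into `m` transpositions as an equivalence
relation `π`. In genus zero the number of factorizations with given `σ` and `π` is
`m! * ∏ B, |B| ^ (l(B) - 3) * ∏ c, |c| ^ (|c| + 1) / |c|!`,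
where `B` runs over the classes of `π`, `l(B)` is the number of cycles of `σ` inside `B`, and `c`
runs over the cycles of `σ`. This follows by induction on `m`: removing the first transposition
joins two cycles or cuts one, and if it cuts a cycle it may split a class of `π` as well. The
resulting recursion reduces to Hurwitz's multivariate form of Abel's binomial theorem and to
identities for the numbers `k ^ k / k!`, which come from iterated differences of polynomials.

A covering with 3-cycles `s₁`, `s₂` over the degenerate branch points is a factorization of
`(s₁ * s₂)⁻¹` whose orbits become connected once those of `s₁` and `s₂` are added. How far the
orbits may differ from the full set depends only on the way the supports of `s₁` and `s₂` overlap;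
in each case the sum over the admissible `π` is again an Abel sum. Adding up the cases over ordered
triples counts every pair of 3-cycles nine times.
-/

namespace HurwitzNumber

section AbelHurwitz

variable {ι K : Type*}

lemma add_sum_pow_card_sub [Field K] [LinearOrder K] [IsStrictOrderedRing K]
    {x : ι → K} {a : K} {S : Finset ι} (hx : ∀ i ∈ S, 0 < x i) (ha : 0 < a)
    (p : ℤ) :
    (a + ∑ i ∈ S, x i) ^ ((S.card : ℤ) - p) =
      (a + ∑ i ∈ S, x i) ^ ((S.card : ℤ) - (p + 1)) * (a + ∑ i ∈ S, x i) := by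
  have : a + ∑ i ∈ S, x i ≠ 0 :=
    (add_pos_of_pos_of_nonneg ha (Finset.sum_nonneg fun i hi => (hx i hi).le)).ne'
  rw [← zpow_add_one₀ this]
  congr 1
  ring

variable [DecidableEq ι]

lemma sum_powerset_sdiff {M : Type*} [AddCommMonoid M] (C : Finset ι)
    (f : Finset ι → Finset ι → M) :
    ∑ S ∈ C.powerset, f (C \ S) S = ∑ S ∈ C.powerset, f S (C \ S) := by
  refine Finset.sum_nbij' (C \ ·) (C \ ·) ?_ ?_ ?_ ?_ ?_ <;> intro S hS <;>
    simp_all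

lemma sum_powerset_sum_mem {M : Type*} [AddCommMonoid M] (C : Finset ι)
    (f : ι → Finset ι → M) :
    ∑ S ∈ C.powerset, ∑ j ∈ S, f j S =
      ∑ j ∈ C, ∑ S ∈ (C.erase j).powerset, f j (insert j S) := by
  have swap_sums : ∑ S ∈ C.powerset, ∑ j ∈ S, f j S =
      ∑ j ∈ C, ∑ S ∈ C.powerset with j ∈ S, f j S := by
    refine Finset.sum_comm' fun S j => ?_
    simp only [Finset.mem_powerset, Finset.mem_filter]
    exact ⟨fun h => ⟨h, h.1 h.2⟩, fun h => h.1⟩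
  rw [swap_sums]
  refine Finset.sum_congr rfl fun j hj => ?_
  refine Finset.sum_nbij' (·.erase j) (insert j ·) ?_ ?_ ?_ ?_ ?_ <;> intro S hS <;>
    simp only [Finset.mem_powerset, Finset.mem_filter] at hS
  · exact Finset.mem_powerset.2 (Finset.erase_subset_erase _ hS.1)
  · simp [Finset.insert_subset_iff, hj, hS.trans (Finset.erase_subset _ _)]
  · exact Finset.insert_erase hS.2
  · exact Finset.erase_insert fun h => Finset.notMem_erase j C (hS h)
  · rw [Finset.insert_erase hS.2]

variable [Field K]

/-- The sum of Hurwitz's multivariate Abel identities: over all ways of splitting `C` into `S` and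
`C \ S`, of a power of `a + ∑ S` times a power of `b + ∑ (C \ S)`, where the exponents fall short of
the cardinalities by `p` and `q`. -/
def abelSum (x : ι → K) (p q : ℤ) (C : Finset ι) (a b : K) : K :=
  ∑ S ∈ C.powerset, (a + ∑ i ∈ S, x i) ^ ((S.card : ℤ) - p) *
    (b + ∑ i ∈ C \ S, x i) ^ (((C \ S).card : ℤ) - q)

lemma abelSum_comm (x : ι → K) (p q : ℤ) (C : Finset ι) (a b : K) :
    abelSum x p q C a b = abelSum x q p C b a := by
  rw [abelSum, ← sum_powerset_sdiff C fun S T =>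
    (a + ∑ i ∈ S, x i) ^ ((S.card : ℤ) - p) * (b + ∑ i ∈ T, x i) ^ ((T.card : ℤ) - q)]
  simp only [abelSum, mul_comm]

lemma add_add_sum_erase (x : ι → K) (a b : K) {C : Finset ι} {j : ι} (hj : j ∈ C) :
    a + x j + b + ∑ i ∈ C.erase j, x i = a + b + ∑ i ∈ C, x i := by
  rw [← Finset.add_sum_erase C x hj]
  ring

variable [LinearOrder K] [IsStrictOrderedRing K] {x : ι → K} {C : Finset ι} {a b : K}

lemma mul_abelSum_add_one_left (hx : ∀ i ∈ C, 0 < x i) (ha : 0 < a) (b : K) (p q : ℤ) :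
    a * abelSum x (p + 1) q C a b =
      abelSum x p q C a b - ∑ j ∈ C, x j * abelSum x p q (C.erase j) (a + x j) b := by
  have pull_out : ∑ j ∈ C, x j * abelSum x p q (C.erase j) (a + x j) b =
      ∑ S ∈ C.powerset, ∑ j ∈ S, x j * ((a + ∑ i ∈ S, x i) ^ ((S.card : ℤ) - (p + 1)) *
        (b + ∑ i ∈ C \ S, x i) ^ (((C \ S).card : ℤ) - q)) := by
    rw [sum_powerset_sum_mem]
    refine Finset.sum_congr rfl fun j _ => ?_
    rw [abelSum, Finset.mul_sum]
    refine Finset.sum_congr rfl fun S hS => ?_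
    have hjS : j ∉ S := fun h => Finset.notMem_erase j C (Finset.mem_powerset.1 hS h)
    rw [Finset.sum_insert hjS, Finset.card_insert_of_notMem hjS, add_assoc,
      Finset.sdiff_insert, Finset.erase_sdiff_comm]
    push_cast
    rw [add_sub_add_right_eq_sub]
  rw [pull_out, abelSum, abelSum, Finset.mul_sum, ← Finset.sum_sub_distrib]
  refine Finset.sum_congr rfl fun S hS => ?_
  rw [← Finset.sum_mul,
    add_sum_pow_card_sub (fun i hi => hx i (Finset.mem_powerset.1 hS hi)) ha p]
  ring

lemma add_sum_mul_abelSum (hx : ∀ i ∈ C, 0 < x i) (ha : 0 < a) (hb : 0 < b) (p q : ℤ) :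
    (a + b + ∑ i ∈ C, x i) * abelSum x (p + 1) (q + 1) C a b =
      abelSum x p (q + 1) C a b + abelSum x (p + 1) q C a b := by
  simp only [abelSum, Finset.mul_sum, ← Finset.sum_add_distrib]
  refine Finset.sum_congr rfl fun S hS => ?_
  have hS := Finset.mem_powerset.1 hS
  rw [add_sum_pow_card_sub (fun i hi => hx i (hS hi)) ha p,
    add_sum_pow_card_sub (fun i hi => hx i (Finset.sdiff_subset hi)) hb q,
    ← Finset.sum_sdiff hS]
  ring

theorem mul_abelSum_one_zero (hx : ∀ i ∈ C, 0 < x i) (ha : 0 < a) (hb : 0 < b) :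
    a * abelSum x 1 0 C a b = (a + b + ∑ i ∈ C, x i) ^ C.card := by
  induction C using Finset.strongInduction generalizing a b with
  | H C ih =>
  rcases C.eq_empty_or_nonempty with rfl | hne
  · simp [abelSum, ha.ne']
  set N := a + b + ∑ i ∈ C, x i with hN
  have recursion : ∀ a b : K, 0 < a → 0 < b → a + b + ∑ i ∈ C, x i = N →
      b * abelSum x 1 0 C b a =
        a * b * abelSum x 1 1 C a b + (∑ j ∈ C, x j) * N ^ (C.card - 1) := by
    intro a b ha hb hab
    have lower := mul_abelSum_add_one_left hx ha b 0 1
    have smaller : ∀ j ∈ C, b * abelSum x 0 1 (C.erase j) (a + x j) b = N ^ (C.card - 1) := by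
      intro j hj
      rw [abelSum_comm, ih _ (Finset.erase_ssubset hj)
        (fun i hi => hx i (Finset.mem_of_mem_erase hi)) hb (add_pos ha (hx j hj)),
        add_comm b, add_add_sum_erase x a b hj, hab, Finset.card_erase_of_mem hj]
    rw [Finset.sum_mul, ← Finset.sum_congr rfl fun j hj => congrArg (x j * ·) (smaller j hj),
      abelSum_comm x 1 0 C b a]
    simp only [mul_left_comm _ b, ← Finset.mul_sum]
    rw [zero_add] at lower
    linear_combination -b * lower
  have hX : 0 < ∑ i ∈ C, x i := Finset.sum_pos hx hne
  have left := recursion b a hb ha (by rw [hN]; ring)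
  have right := recursion a b ha hb rfl
  have total := add_sum_mul_abelSum hx ha hb 0 0
  rw [abelSum_comm x 1 1 C b a] at left
  rw [zero_add, abelSum_comm x 0 1 C a b, ← hN] at total
  refine mul_left_cancel₀ hX.ne' ?_
  rw [← Nat.sub_add_cancel hne.card_pos, pow_succ]
  linear_combination (N - a) * left + a * b * total + a * right - a * abelSum x 1 0 C a b * hN

theorem mul_abelSum_one_one (hx : ∀ i ∈ C, 0 < x i) (ha : 0 < a) (hb : 0 < b) :
    a * b * abelSum x 1 1 C a b =
      (a + b) * (a + b + ∑ i ∈ C, x i) ^ ((C.card : ℤ) - 1) := by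
  have hN : a + b + ∑ i ∈ C, x i ≠ 0 :=
    (add_pos_of_pos_of_nonneg (add_pos ha hb) (Finset.sum_nonneg fun i hi => (hx i hi).le)).ne'
  have total := add_sum_mul_abelSum hx ha hb 0 0
  have left := mul_abelSum_one_zero hx ha hb
  have right := mul_abelSum_one_zero hx hb ha
  rw [zero_add, abelSum_comm x 0 1 C a b] at total
  rw [add_comm b] at right
  rw [zpow_sub_one₀ hN, zpow_natCast]
  field_simp
  linear_combination a * b * total + b * left + a * right

theorem abelSum_two_one (hx : ∀ i ∈ C, 0 < x i) (ha : 0 < a) (hb : 0 < b) :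
    abelSum x 2 1 C a b =
      (a + b) / (a ^ 2 * b) * (a + b + ∑ i ∈ C, x i) ^ ((C.card : ℤ) - 1) -
        ∑ j ∈ C, x j * (a + b + x j) / (a * b * (a + x j)) *
          (a + b + ∑ i ∈ C, x i) ^ ((C.card : ℤ) - 2) := by
  have lower := mul_abelSum_add_one_left hx ha b 1 1
  have smaller : ∑ j ∈ C, x j * abelSum x 1 1 (C.erase j) (a + x j) b =
      a * ∑ j ∈ C, x j * (a + b + x j) / (a * b * (a + x j)) *
        (a + b + ∑ i ∈ C, x i) ^ ((C.card : ℤ) - 2) := by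
    rw [Finset.mul_sum]
    refine Finset.sum_congr rfl fun j hj => ?_
    have hxj := hx j hj
    have h := mul_abelSum_one_one (fun i hi => hx i (Finset.mem_of_mem_erase hi))
      (add_pos ha hxj) hb (C := C.erase j)
    rw [add_add_sum_erase x a b hj, Finset.card_erase_of_mem hj,
      Nat.cast_pred (Finset.card_pos.2 ⟨j, hj⟩), sub_sub, one_add_one_eq_two] at h
    field_simp
    linear_combination h
  have h := mul_abelSum_one_one hx ha hb
  rw [one_add_one_eq_two, smaller] at lower
  refine mul_left_cancel₀ ha.ne' (lower.trans ?_)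
  rw [mul_sub]
  congr 1
  field_simp
  linear_combination h

theorem abelSum_two_two_of_eq_one (hx : ∀ i ∈ C, x i = 1) (ha : 0 < a) (hb : 0 < b) :
    abelSum x 2 2 C a b =
      ((a + b) / (a * b)) ^ 2 * (a + b + C.card) ^ ((C.card : ℤ) - 2) -
        C.card * ((a + b + 1) * (a + b + 2) / (a * b * (a + 1) * (b + 1))) *
          (a + b + C.card) ^ ((C.card : ℤ) - 3) := by
  have hpos : ∀ i ∈ C, 0 < x i := fun i hi => by rw [hx i hi]; exact one_pos
  have sum_eq_card : ∑ i ∈ C, x i = C.card := by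
    rw [Finset.sum_congr rfl hx, Finset.sum_const, nsmul_one]
  have sum_div (u v : K) : ∑ j ∈ C, x j * (u + v + x j) / (u * v * (u + x j)) *
        (u + v + C.card) ^ ((C.card : ℤ) - 2) =
      C.card * ((u + v + 1) / (u * v * (u + 1)) * (u + v + C.card) ^ ((C.card : ℤ) - 2)) := by
    rw [Finset.sum_congr rfl fun j hj => by rw [hx j hj, one_mul], Finset.sum_const, nsmul_eq_mul]
  have total := add_sum_mul_abelSum hpos ha hb 1 1
  rw [one_add_one_eq_two, abelSum_comm x 1 2, abelSum_two_one hpos ha hb,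
    abelSum_two_one hpos hb ha, sum_eq_card, sum_div, sum_div, add_comm b a] at total
  have hn : a + b + (C.card : K) ≠ 0 := by positivity
  refine mul_left_cancel₀ hn (total.trans ?_)
  rw [show (C.card : ℤ) - 1 = (C.card : ℤ) - 3 + 1 + 1 by ring,
    show (C.card : ℤ) - 2 = (C.card : ℤ) - 3 + 1 by ring, zpow_add_one₀ hn, zpow_add_one₀ hn]
  field_simp
  ring

theorem abelSum_two_two_add_six_mul_abelSum_three_two (hx : ∀ i ∈ C, x i = 1) :
    abelSum x 2 2 C 2 1 + 6 * abelSum x 3 2 C 2 1 =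
      3 / 4 * (((C.card : K) + 3) ^ 2 + 13 * (C.card + 3) + 60) *
        ((C.card : K) + 3) ^ ((C.card : ℤ) - 4) := by
  have hpos : ∀ i ∈ C, 0 < x i := fun i hi => by rw [hx i hi]; exact one_pos
  have erase_eq (j) (hj : j ∈ C) : x j * abelSum x 2 2 (C.erase j) (2 + x j) 1 =
      16 / 9 * (C.card + 3) ^ ((C.card : ℤ) - 3) -
        5 / 4 * ((C.card : K) - 1) * (C.card + 3) ^ ((C.card : ℤ) - 4) := by
    have hcard : C.card = (C.erase j).card + 1 := (Finset.card_erase_add_one hj).symm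
    rw [hx j hj, abelSum_two_two_of_eq_one (fun i hi => hx i (Finset.mem_of_mem_erase hi))
      (by positivity) one_pos, hcard]
    push_cast
    ring_nf
  have recurrence : 2 * abelSum x 3 2 C 2 1 = _ := mul_abelSum_add_one_left hpos two_pos 1 2 2
  have hn : (C.card : K) + 3 ≠ 0 := by positivity
  rw [Finset.sum_congr rfl erase_eq, Finset.sum_const, nsmul_eq_mul] at recurrence
  have value := abelSum_two_two_of_eq_one hx two_pos one_pos
  rw [show (2 : K) + 1 + C.card = C.card + 3 by ring] at value
  rw [show (C.card : ℤ) - 2 = (C.card : ℤ) - 4 + 1 + 1 by ring, zpow_add_one₀ hn] at value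
  rw [show (C.card : ℤ) - 3 = (C.card : ℤ) - 4 + 1 by ring, zpow_add_one₀ hn] at value recurrence
  linear_combination 3 * recurrence + 4 * value

end AbelHurwitz

section TreeIdentities

open Finset
open scoped Nat fwdDiff

lemma add_pow_div_factorial (x y : ℚ) (n : ℕ) :
    (x + y) ^ n / n ! = ∑ p ∈ antidiagonal n, x ^ p.1 / p.1 ! * (y ^ p.2 / p.2 !) := by
  rw [(Commute.all x y).add_pow', sum_div]
  refine sum_congr rfl fun p hp => ?_
  have factorials : ((n.choose p.1 : ℕ) : ℚ) * (p.1 ! * p.2 !) = n ! := by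
    rw [← HasAntidiagonal.mem_antidiagonal.1 hp]
    rw [Nat.choose_symm_add]
    exact_mod_cast (mul_assoc _ _ _).symm.trans
      (Nat.add_choose_mul_factorial_mul_factorial p.1 p.2)
  have : n ! ≠ 0 := n.factorial_ne_zero
  rw [nsmul_eq_mul]
  field_simp
  linear_combination x ^ p.1 * y ^ p.2 * factorials

lemma fwdDiff_iter_div_factorial (f : ℕ → ℚ) (n : ℕ) :
    (Δ_[1])^[n] f 0 / n ! =
      ∑ p ∈ antidiagonal n, (-1) ^ p.2 / p.2 ! * (f p.1 / p.1 !) := by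
  rw [fwdDiff_iter_eq_sum_shift, Nat.sum_antidiagonal_eq_sum_range_succ_mk, sum_div]
  refine sum_congr rfl fun i hi => ?_
  have factorials := Nat.cast_choose ℚ (Nat.lt_succ_iff.1 (mem_range.1 hi))
  rw [zsmul_eq_mul, zero_add, nsmul_one]
  push_cast
  rw [factorials]
  field_simp

/-- Expanding each `(y - a) ^ b` by the binomial theorem turns the sum into iterated differences at
`0`, and these vanish in high order when `x ^ i * g x` is a polynomial of small degree. -/
lemma sum_antidiagonal_mul_sub_pow (n : ℕ) (y : ℚ) (g : ℕ → ℚ) :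
    ∑ p ∈ antidiagonal n, (p.1 : ℚ) ^ p.1 / p.1 ! * ((y - p.1) ^ p.2 / p.2 !) * g p.1 =
      ∑ p ∈ antidiagonal n,
        (Δ_[1])^[p.1] (fun x : ℕ => (x : ℚ) ^ p.1 * g x) 0 / p.1 ! * (y ^ p.2 / p.2 !) := by
  simp only [fwdDiff_iter_div_factorial, sub_eq_neg_add, add_pow_div_factorial, mul_sum, sum_mul,
    sum_sigma']
  refine sum_nbij' (fun q => ⟨(q.1.1 + q.2.1, q.2.2), (q.1.1, q.2.1)⟩)
    (fun q => ⟨(q.2.1, q.2.2 + q.1.2), (q.2.2, q.1.2)⟩) ?_ ?_ ?_ ?_ ?_ <;>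
    rintro ⟨⟨i, j⟩, ⟨k, l⟩⟩ h <;> simp only [mem_sigma, HasAntidiagonal.mem_antidiagonal] at h ⊢
  · exact ⟨by omega, trivial⟩
  · exact ⟨by omega, trivial⟩
  · simp [h.2]
  · simp [h.2]
  · rw [neg_pow, pow_add]
    ring

lemma fwdDiff_iter_natCast_pow_eq_zero {j n : ℕ} (h : j < n) :
    (Δ_[1])^[n] (fun x : ℕ => (x : ℚ) ^ j) = 0 := by
  ext x
  have := congrFun (fwdDiff_iter_pow_eq_zero_of_lt (R := ℚ) h) x
  simpa [fwdDiff_iter_eq_sum_shift] using this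

lemma fwdDiff_iter_inv (n : ℕ) {x : ℕ} (hx : 0 < x) :
    (Δ_[1])^[n] (fun x : ℕ => (x : ℚ)⁻¹) x = (-1) ^ n * n ! / x.ascFactorial (n + 1) := by
  induction n generalizing x with
  | zero => simp [Nat.ascFactorial_succ]
  | succ n ih =>
    rw [Function.iterate_succ_apply', fwdDiff, ih hx, ih x.succ_pos]
    have shift : (x.ascFactorial (n + 2) : ℚ) = x * (x + 1).ascFactorial (n + 1) := by
      exact_mod_cast (Nat.succ_ascFactorial x (n + 1)).symm
    have step : (x.ascFactorial (n + 2) : ℚ) = (x + n + 1) * x.ascFactorial (n + 1) := by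
      rw [Nat.ascFactorial_succ]
      push_cast
      ring
    have hx' : (x : ℚ) ≠ 0 := by positivity
    have h₁ : (x.ascFactorial (n + 1) : ℚ) ≠ 0 := by
      obtain ⟨y, rfl⟩ := Nat.exists_eq_succ_of_ne_zero hx.ne'
      exact_mod_cast (Nat.ascFactorial_pos y _).ne'
    have h₂ : ((x + 1).ascFactorial (n + 1) : ℚ) ≠ 0 := by
      exact_mod_cast (Nat.ascFactorial_pos x _).ne'
    rw [pow_succ, Nat.factorial_succ, shift]
    push_cast
    rw [div_sub_div _ _ h₂ h₁, div_eq_div_iff (by positivity) (by positivity)]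
    linear_combination (n ! * (x + 1).ascFactorial (n + 1) * (-1) ^ n : ℚ) * (shift - step)

lemma fwdDiff_iter_pow_div_add {k : ℕ} (hk : 0 < k) (n : ℕ) :
    (Δ_[1])^[n] (fun x : ℕ => (x : ℚ) ^ n * ((x : ℚ) + k)⁻¹) 0 / n ! =
      (k : ℚ) ^ n * ((k - 1)! / (k + n)!) := by
  have divide : (fun x : ℕ => (x : ℚ) ^ n * ((x : ℚ) + k)⁻¹) =
      (fun x : ℕ => ∑ i ∈ range n, (-k : ℚ) ^ (n - 1 - i) * (x : ℚ) ^ i) +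
        (-k : ℚ) ^ n • fun x : ℕ => (((x + k : ℕ) : ℚ))⁻¹ := by
    ext x
    have hx : (x : ℚ) + k ≠ 0 := by positivity
    have geometric := (Commute.all (x : ℚ) (-k)).geom_sum₂_mul n
    simp only [Pi.add_apply, Pi.smul_apply, smul_eq_mul, Nat.cast_add, mul_comm ((-k : ℚ) ^ _)]
    rw [sub_neg_eq_add] at geometric
    field_simp
    linear_combination -geometric
  have polynomial_part : (Δ_[1])^[n]
      (fun x : ℕ => ∑ i ∈ range n, (-k : ℚ) ^ (n - 1 - i) * (x : ℚ) ^ i) 0 = 0 := by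
    have := congrFun
      (fwdDiff_iter_sum_mul_pow_eq_zero (n := n) fun i => (-k : ℚ) ^ (n - 1 - i)) 0
    simpa [fwdDiff_iter_eq_sum_shift] using this
  have factorials : ((k - 1)! * k.ascFactorial (n + 1) : ℚ) = (k + n)! := by
    exact_mod_cast Nat.factorial_mul_ascFactorial' k (n + 1) hk
  have asc_ne_zero : (k.ascFactorial (n + 1) : ℚ) ≠ 0 :=
    right_ne_zero_of_mul (factorials ▸ Nat.cast_ne_zero.2 (Nat.factorial_ne_zero _))
  rw [divide, fwdDiff_iter_add, fwdDiff_iter_const_smul, Pi.add_apply, polynomial_part,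
    Pi.smul_apply, fwdDiff_iter_comp_add 1 (fun x : ℕ => (x : ℚ)⁻¹) k n 0, zero_add, zero_add,
    fwdDiff_iter_inv n hk, ← factorials, smul_eq_mul, neg_pow]
  have sign : ((-1 : ℚ) ^ n) * (-1) ^ n = 1 := by rw [← mul_pow]; simp
  field_simp
  linear_combination sign

/-- The coefficient `k ^ k / k!` of the exponential generating function of the maps of a finite set
to itself. -/
def mapCoeff (k : ℕ) : ℚ := (k : ℚ) ^ k / k !

lemma mapCoeff_zero : mapCoeff 0 = 1 := by
  simp [mapCoeff]

lemma mapCoeff_succ (k : ℕ) : mapCoeff (k + 1) = ((k + 1 : ℕ) : ℚ) ^ k / k ! := by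
  rw [mapCoeff, Nat.factorial_succ, pow_succ, Nat.cast_mul]
  field_simp

lemma mapCoeff_pos {k : ℕ} (hk : 0 < k) : 0 < mapCoeff k := by
  unfold mapCoeff
  positivity

lemma sum_mapCoeff_mul_mapCoeff_sub {n : ℕ} (g : ℕ → ℚ) :
    ∑ a ∈ range (n + 1), mapCoeff a * mapCoeff (n + 1 - a) * g a =
      ∑ p ∈ antidiagonal n, (Δ_[1])^[p.1] (fun x : ℕ => (x : ℚ) ^ p.1 * g x) 0 / p.1 ! *
        (((n + 1 : ℕ) : ℚ) ^ p.2 / p.2 !) := by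
  rw [← sum_antidiagonal_mul_sub_pow, Nat.sum_antidiagonal_eq_sum_range_succ_mk]
  refine sum_congr rfl fun a ha => ?_
  have ha := Nat.lt_succ_iff.1 (mem_range.1 ha)
  rw [Nat.succ_sub ha, mapCoeff_succ, mapCoeff]
  push_cast [Nat.cast_sub ha]
  ring

lemma sum_mapCoeff_mul_mapCoeff_div {k : ℕ} (hk : 0 < k) :
    ∑ a ∈ Ico 1 k, mapCoeff a * mapCoeff (k - a) / a = (1 - 1 / k) * mapCoeff k := by
  obtain ⟨n, rfl : k = n + 1⟩ := Nat.exists_eq_succ_of_ne_zero hk.ne'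
  have expand := sum_mapCoeff_mul_mapCoeff_sub (n := n) fun a => (a : ℚ)⁻¹
  have only_one : ∀ i ≠ 1,
      (Δ_[1])^[i] (fun x : ℕ => (x : ℚ) ^ i * (x : ℚ)⁻¹) 0 / i ! = 0 := by
    rintro (_ | _ | i) hi
    · simp
    · exact absurd rfl hi
    · have cancel : (fun x : ℕ => (x : ℚ) ^ (i + 2) * (x : ℚ)⁻¹) =
          fun x : ℕ => (x : ℚ) ^ (i + 1) := by
        ext x
        rcases eq_or_ne x 0 with rfl | hx
        · simp
        · rw [pow_succ, mul_inv_cancel_right₀ (Nat.cast_ne_zero.2 hx)]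
      rw [cancel, fwdDiff_iter_natCast_pow_eq_zero (i + 1).lt_succ_self]
      simp
  simp only [← div_eq_mul_inv] at expand only_one
  rw [range_eq_Ico, sum_eq_sum_Ico_succ_bot n.succ_pos, Nat.cast_zero, div_zero, zero_add,
    zero_add] at expand
  rw [expand]
  cases n with
  | zero => simp
  | succ n =>
    rw [sum_eq_single (1, n)]
    · rw [mapCoeff_succ, Nat.factorial_succ]
      simp only [Function.iterate_one, fwdDiff]
      push_cast [Nat.factorial_succ]
      field_simp
      ring
    · rintro ⟨i, j⟩ hij hne
      have hi : i ≠ 1 := by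
        rintro rfl
        exact hne (Prod.ext rfl (by have := HasAntidiagonal.mem_antidiagonal.1 hij; omega))
      rw [only_one i hi, zero_mul]
    · exact fun h => absurd (HasAntidiagonal.mem_antidiagonal.2 (add_comm 1 n)) h

/-- The sum, over the ways of cutting `k` into positive parts `a` and `k - a`, of the products of
the map coefficients of the parts, divided by `a + l`. -/
def cutSum (k l : ℕ) : ℚ :=
  ∑ a ∈ Ico 1 k, mapCoeff a * mapCoeff (k - a) / (a + l)

lemma mul_mapCoeff_mul_cutSum {k l : ℕ} (hk : 0 < k) (hl : 0 < l) :
    k * mapCoeff k * cutSum l k + mapCoeff k * mapCoeff l =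
      ∑ i ∈ range l, (k : ℚ) ^ (k + i) / (k + i)! * ((l : ℚ) ^ (l - 1 - i) / (l - 1 - i)!) := by
  obtain ⟨n, rfl : l = n + 1⟩ := Nat.exists_eq_succ_of_ne_zero hl.ne'
  have expand := sum_mapCoeff_mul_mapCoeff_sub (n := n) fun a => ((a : ℚ) + k)⁻¹
  simp only [fwdDiff_iter_pow_div_add hk] at expand
  rw [range_eq_Ico, sum_eq_sum_Ico_succ_bot n.succ_pos,
    Nat.sum_antidiagonal_eq_sum_range_succ_mk] at expand
  have factorials : (k : ℚ) * mapCoeff k * (k - 1)! = (k : ℚ) ^ k := by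
    rw [mapCoeff, ← Nat.mul_factorial_pred hk.ne']
    push_cast
    field_simp
  have term : ∀ i, (k : ℚ) ^ (k + i) / (k + i)! *
      (((n + 1 : ℕ) : ℚ) ^ (n + 1 - 1 - i) / (n + 1 - 1 - i)!) =
      k * mapCoeff k * (k ^ i * ((k - 1)! / (k + i)!) *
        (((n + 1 : ℕ) : ℚ) ^ (n - i) / (n - i)!)) := by
    intro i
    rw [pow_add, ← factorials, Nat.add_sub_cancel]
    ring
  simp only [term, ← mul_sum]
  have head : k * mapCoeff k * (mapCoeff 0 * mapCoeff (n + 1 - 0) * (((0 : ℕ) : ℚ) + k)⁻¹) =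
      mapCoeff k * mapCoeff (n + 1) := by
    rw [mapCoeff_zero, Nat.sub_zero, Nat.cast_zero, zero_add]
    field_simp
  rw [← expand, mul_add, head, add_comm, zero_add]
  simp only [cutSum, div_eq_mul_inv]

/-- Both sums are tails of the binomial expansion of `(k + l) ^ (k + l - 1)`, and the two tails are
complementary. -/
lemma mapCoeff_add {k l : ℕ} (hk : 0 < k) (hl : 0 < l) :
    k * mapCoeff k * cutSum l k + l * mapCoeff l * cutSum k l +
        2 * mapCoeff k * mapCoeff l = mapCoeff (k + l) := by
  have binomial : mapCoeff (k + l) = ∑ i ∈ range (k + l),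
      (k : ℚ) ^ i / i ! * ((l : ℚ) ^ (k + l - 1 - i) / (k + l - 1 - i)!) := by
    obtain ⟨n, hn : k + l = n + 1⟩ := Nat.exists_eq_succ_of_ne_zero (Nat.add_pos_left hk l).ne'
    rw [hn, mapCoeff_succ, ← hn, Nat.cast_add, add_pow_div_factorial,
      Nat.sum_antidiagonal_eq_sum_range_succ_mk]
    simp [hn]
  have upper : ∀ i ∈ range l, (k : ℚ) ^ (k + i) / (k + i)! *
      ((l : ℚ) ^ (k + l - 1 - (k + i)) / (k + l - 1 - (k + i))!) =
      (k : ℚ) ^ (k + i) / (k + i)! * ((l : ℚ) ^ (l - 1 - i) / (l - 1 - i)!) := by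
    intro i _
    rw [show k + l - 1 - (k + i) = l - 1 - i by omega]
  have lower : ∑ i ∈ range k, (k : ℚ) ^ i / i ! *
      ((l : ℚ) ^ (k + l - 1 - i) / (k + l - 1 - i)!) =
      ∑ i ∈ range k, (l : ℚ) ^ (l + i) / (l + i)! * ((k : ℚ) ^ (k - 1 - i) / (k - 1 - i)!) := by
    rw [← sum_range_reflect]
    refine sum_congr rfl fun i hi => ?_
    have := mem_range.1 hi
    rw [show k + l - 1 - (k - 1 - i) = l + i by omega, mul_comm]
  rw [binomial, sum_range_add, lower, sum_congr rfl upper, ← mul_mapCoeff_mul_cutSum hk hl,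
    ← mul_mapCoeff_mul_cutSum hl hk]
  ring

end TreeIdentities

section CutJoinIdentity

open Finset

/-- The weight `k ^ (k + 1) / k!` with which a cycle of length `k` enters the genus-zero Hurwitz
numbers. -/
def cycleWeight (k : ℕ) : ℚ := k * mapCoeff k

lemma cycleWeight_one : cycleWeight 1 = 1 := by norm_num [cycleWeight, mapCoeff]

lemma cycleWeight_pos {k : ℕ} (hk : 0 < k) : 0 < cycleWeight k :=
  mul_pos (Nat.cast_pos.2 hk) (mapCoeff_pos hk)

lemma mul_join_term {k l : ℕ} (hk : 0 < k) (hl : 0 < l) {n : ℚ} (hn : n ≠ 0) (p : ℤ) :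
    n * (k * l * (cycleWeight (k + l) / (cycleWeight k * cycleWeight l) * n ^ (p - 1))) =
      (k + l) / (mapCoeff k * mapCoeff l) * mapCoeff (k + l) * n ^ p := by
  have := mapCoeff_pos hk
  have := mapCoeff_pos hl
  rw [zpow_sub_one₀ hn, cycleWeight, cycleWeight, cycleWeight]
  push_cast
  field_simp

variable {ι : Type*} [DecidableEq ι] {l : ι → ℕ} {C : Finset ι} {k : ℕ}

lemma cycleWeight_mul_abelSum_two_one (hl : ∀ i ∈ C, 0 < l i) {a b : ℕ} (ha : 0 < a) (hb : 0 < b) :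
    cycleWeight a * cycleWeight b * abelSum (fun i => (l i : ℚ)) 2 1 C a b =
      (a + b) * (a + b + ∑ i ∈ C, (l i : ℚ)) ^ ((C.card : ℤ) - 1) *
          (mapCoeff a * mapCoeff b / a) -
        ∑ j ∈ C, l j * (a + b + l j) * (a + b + ∑ i ∈ C, (l i : ℚ)) ^ ((C.card : ℤ) - 2) *
          (mapCoeff a * mapCoeff b / (a + l j)) := by
  have ha' : (0 : ℚ) < a := Nat.cast_pos.2 ha
  have hb' : (0 : ℚ) < b := Nat.cast_pos.2 hb
  rw [abelSum_two_one (fun i hi => Nat.cast_pos.2 (hl i hi)) ha' hb', mul_sub, mul_sum,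
    cycleWeight, cycleWeight]
  congr 1
  · field_simp
  · refine sum_congr rfl fun j _ => ?_
    field_simp

/-- Symmetrising in the two parts reduces the exponents `2, 2` to `2, 1`. -/
lemma mul_sum_cycleWeight_abelSum_two_two (hl : ∀ i ∈ C, 0 < l i) (k : ℕ) :
    (k + ∑ i ∈ C, (l i : ℚ)) * ∑ a ∈ Ico 1 k, cycleWeight a * cycleWeight (k - a) *
        abelSum (fun i => (l i : ℚ)) 2 2 C a ((k - a : ℕ) : ℚ) =
      2 * ∑ a ∈ Ico 1 k, cycleWeight a * cycleWeight (k - a) *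
        abelSum (fun i => (l i : ℚ)) 2 1 C a ((k - a : ℕ) : ℚ) := by
  have reflect : ∑ a ∈ Ico 1 k, cycleWeight a * cycleWeight (k - a) *
        abelSum (fun i => (l i : ℚ)) 1 2 C a ((k - a : ℕ) : ℚ) =
      ∑ a ∈ Ico 1 k, cycleWeight a * cycleWeight (k - a) *
        abelSum (fun i => (l i : ℚ)) 2 1 C a ((k - a : ℕ) : ℚ) := by
    refine sum_nbij' (k - ·) (k - ·) ?_ ?_ ?_ ?_ ?_ <;> intro a ha <;>
      obtain ⟨ha, hak⟩ := mem_Ico.1 ha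
    · exact mem_Ico.2 (by omega)
    · exact mem_Ico.2 (by omega)
    · exact Nat.sub_sub_self hak.le
    · exact Nat.sub_sub_self hak.le
    · rw [Nat.sub_sub_self hak.le, abelSum_comm, mul_comm (cycleWeight a)]
  rw [two_mul]
  nth_rewrite 2 [← reflect]
  rw [mul_sum, ← sum_add_distrib]
  refine sum_congr rfl fun a ha => ?_
  obtain ⟨ha, hak⟩ := mem_Ico.1 ha
  have total := add_sum_mul_abelSum (fun i hi => Nat.cast_pos.2 (hl i hi))
    (Nat.cast_pos.2 ha) (Nat.cast_pos.2 (Nat.sub_pos_of_lt hak)) (1 : ℤ) 1 (K := ℚ)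
  rw [← Nat.cast_add, Nat.add_sub_cancel' hak.le, one_add_one_eq_two] at total
  linear_combination cycleWeight a * cycleWeight (k - a) * total

lemma mul_sum_cycleWeight_abelSum (hl : ∀ i ∈ C, 0 < l i) (hk : 0 < k) :
    (k + ∑ i ∈ C, (l i : ℚ)) * ∑ a ∈ Ico 1 k, cycleWeight a * cycleWeight (k - a) *
        abelSum (fun i => (l i : ℚ)) 2 2 C a ((k - a : ℕ) : ℚ) =
      2 * ((k - 1) * mapCoeff k * (k + ∑ i ∈ C, (l i : ℚ)) ^ ((C.card : ℤ) - 1) -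
        ∑ j ∈ C, l j * (k + l j) * cutSum k (l j) *
          (k + ∑ i ∈ C, (l i : ℚ)) ^ ((C.card : ℤ) - 2)) := by
  rw [mul_sum_cycleWeight_abelSum_two_two hl]
  congr 1
  have expand : ∀ a ∈ Ico 1 k, cycleWeight a * cycleWeight (k - a) *
      abelSum (fun i => (l i : ℚ)) 2 1 C a ((k - a : ℕ) : ℚ) =
      k * (k + ∑ i ∈ C, (l i : ℚ)) ^ ((C.card : ℤ) - 1) *
          (mapCoeff a * mapCoeff (k - a) / a) -
        ∑ j ∈ C, l j * (k + l j) * (k + ∑ i ∈ C, (l i : ℚ)) ^ ((C.card : ℤ) - 2) *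
          (mapCoeff a * mapCoeff (k - a) / (a + l j)) := by
    intro a ha
    obtain ⟨ha, hak⟩ := mem_Ico.1 ha
    rw [cycleWeight_mul_abelSum_two_one hl ha (Nat.sub_pos_of_lt hak), ← Nat.cast_add,
      Nat.add_sub_cancel' hak.le]
  rw [sum_congr rfl expand, sum_sub_distrib, sum_comm]
  simp only [← mul_sum]
  rw [sum_mapCoeff_mul_mapCoeff_div hk]
  congr 1
  · field_simp
  · refine sum_congr rfl fun j _ => ?_
    rw [cutSum]
    ring

lemma sum_sum_erase_comm {M : Type*} [AddCommMonoid M] (C : Finset ι) (f : ι → ι → M) :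
    ∑ c ∈ C, ∑ d ∈ C.erase c, f c d = ∑ c ∈ C, ∑ d ∈ C.erase c, f d c :=
  sum_comm' fun c d => by simp only [mem_erase]; tauto

lemma sum_sum_erase_add (C : Finset ι) (x : ι → ℚ) :
    ∑ c ∈ C, ∑ d ∈ C.erase c, (x c + x d) = 2 * (C.card - 1) * ∑ c ∈ C, x c := by
  have inner : ∀ c ∈ C, ∑ d ∈ C.erase c, (x c + x d) =
      ((C.card : ℚ) - 2) * x c + ∑ c ∈ C, x c := by
    intro c hc
    rw [sum_add_distrib, sum_const, card_erase_of_mem hc, nsmul_eq_mul,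
      Nat.cast_pred (card_pos.2 ⟨c, hc⟩), sum_erase_eq_sub hc]
    ring
  rw [sum_congr rfl inner, sum_add_distrib, ← mul_sum, sum_const, nsmul_eq_mul]
  ring

/-- The part of the cut-and-join recursion that sees the pair of cycles `c, d`: joining `c` and `d`,
and cutting `c` against `d`. -/
lemma sum_sum_mapCoeff_cutSum (hl : ∀ i ∈ C, 0 < l i) :
    ∑ c ∈ C, ∑ d ∈ C.erase c, (l c + l d : ℚ) / (mapCoeff (l c) * mapCoeff (l d)) *
        (mapCoeff (l c + l d) - 2 * (l d * mapCoeff (l d)) * cutSum (l c) (l d)) =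
      4 * (C.card - 1) * ∑ i ∈ C, (l i : ℚ) := by
  set f : ι → ι → ℚ := fun c d => (l c + l d : ℚ) / (mapCoeff (l c) * mapCoeff (l d)) *
    (mapCoeff (l c + l d) - 2 * (l d * mapCoeff (l d)) * cutSum (l c) (l d)) with hf
  have symmetric : ∀ c ∈ C, ∀ d ∈ C.erase c, f c d + f d c = 4 * (l c + l d) := by
    intro c hc d hd
    have hd := hl d (mem_of_mem_erase hd)
    have hc := hl c hc
    have := mapCoeff_pos hc
    have := mapCoeff_pos hd
    simp only [hf, add_comm (l d), ← mapCoeff_add hc hd]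
    field_simp
    ring
  have double : 2 * ∑ c ∈ C, ∑ d ∈ C.erase c, f c d =
      ∑ c ∈ C, ∑ d ∈ C.erase c, 4 * (l c + l d : ℚ) := by
    rw [two_mul]
    nth_rewrite 2 [sum_sum_erase_comm]
    simp only [← sum_add_distrib]
    exact sum_congr rfl fun c hc => sum_congr rfl (symmetric c hc)
  simp only [← mul_sum, sum_sum_erase_add] at double
  linear_combination double / 2

lemma mul_cut_term (hl : ∀ i ∈ C, 0 < l i) {c : ι} (hc : c ∈ C) :
    (∑ i ∈ C, (l i : ℚ)) * (l c * ∑ a ∈ Ico 1 (l c),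
      cycleWeight a * cycleWeight (l c - a) / cycleWeight (l c) *
        abelSum (fun i => (l i : ℚ)) 2 2 (C.erase c) a ((l c - a : ℕ) : ℚ)) =
      2 * (l c - 1) * (∑ i ∈ C, (l i : ℚ)) ^ ((C.card : ℤ) - 2) - ∑ d ∈ C.erase c,
        (l c + l d : ℚ) / (mapCoeff (l c) * mapCoeff (l d)) *
          (2 * (l d * mapCoeff (l d)) * cutSum (l c) (l d)) *
            (∑ i ∈ C, (l i : ℚ)) ^ ((C.card : ℤ) - 3) := by
  have hlc := mapCoeff_pos (hl c hc)
  have hlc' : (0 : ℚ) < l c := Nat.cast_pos.2 (hl c hc)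
  have h := mul_sum_cycleWeight_abelSum (C := C.erase c)
    (fun i hi => hl i (mem_of_mem_erase hi)) (hl c hc)
  rw [add_sum_erase C (fun i => (l i : ℚ)) hc, card_erase_of_mem hc,
    Nat.cast_pred (card_pos.2 ⟨c, hc⟩), sub_sub, sub_sub, one_add_one_eq_two] at h
  simp only [div_mul_eq_mul_div, ← sum_div]
  rw [mul_div_assoc', mul_div_assoc', mul_left_comm, h, cycleWeight, mul_sub, mul_sub, mul_sum,
    mul_sum, sub_div, sum_div]
  congr 1
  · field_simp
  · refine sum_congr rfl fun d hd => ?_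
    have := mapCoeff_pos (hl d (mem_of_mem_erase hd))
    norm_num
    field_simp

theorem cut_join_identity (hl : ∀ i ∈ C, 0 < l i) (hC : C.Nonempty) {n : ℚ}
    (hn : ∑ i ∈ C, (l i : ℚ) = n) :
    ∑ c ∈ C, ∑ d ∈ C.erase c, (l c : ℚ) * l d *
        (cycleWeight (l c + l d) / (cycleWeight (l c) * cycleWeight (l d)) *
          n ^ ((C.card : ℤ) - 4)) +
      ∑ c ∈ C, l c * ∑ a ∈ Ico 1 (l c), cycleWeight a * cycleWeight (l c - a) /
        cycleWeight (l c) *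
          abelSum (fun i => (l i : ℚ)) 2 2 (C.erase c) a ((l c - a : ℕ) : ℚ) =
    2 * (n + C.card - 2) * n ^ ((C.card : ℤ) - 3) := by
  have hn0 : n ≠ 0 := by
    rw [← hn]
    exact (sum_pos (fun i hi => Nat.cast_pos.2 (hl i hi)) hC).ne'
  have join : ∀ c ∈ C, ∀ d ∈ C.erase c, _ := fun c hc d hd =>
    mul_join_term (hl c hc) (hl d (mem_of_mem_erase hd)) hn0 ((C.card : ℤ) - 3)
  have cut : ∀ c ∈ C, _ := fun c hc => mul_cut_term hl hc
  have pairs := sum_sum_mapCoeff_cutSum hl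
  have lengths : ∑ c ∈ C, 2 * ((l c : ℚ) - 1) = 2 * (n - C.card) := by
    rw [← mul_sum, sum_sub_distrib, hn, sum_const, nsmul_one]
  simp only [hn, sub_sub] at join cut pairs
  rw [show (3 : ℤ) + 1 = 4 by norm_num] at join
  have combine := congrArg (· * n ^ ((C.card : ℤ) - 3)) pairs
  simp only [mul_sub, sub_mul, sum_sub_distrib, sum_mul] at combine
  have power : n * n ^ ((C.card : ℤ) - 3) = n ^ ((C.card : ℤ) - 2) := by
    rw [mul_comm, ← zpow_add_one₀ hn0]
    congr 1
    ring
  refine mul_left_cancel₀ hn0 ?_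
  rw [mul_add, mul_sum, mul_sum, sum_congr rfl cut, sum_sub_distrib, ← sum_mul, lengths]
  simp only [mul_sum]
  rw [sum_congr rfl fun c hc => sum_congr rfl (join c hc), ← power]
  linear_combination combine

end CutJoinIdentity

section Blocks

open Finset

variable {α : Type*}

/-- The equivalence relation obtained from `π` by merging the classes of `x` and `y`. -/
def merge (π : Setoid α) (x y : α) : Setoid α where
  r a b := π a b ∨ ((π a x ∨ π a y) ∧ (π b x ∨ π b y))
  iseqv := by
    refine ⟨fun a => Or.inl (π.refl' a), ?_, ?_⟩
    · rintro a b (h | ⟨ha, hb⟩)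
      exacts [Or.inl (π.symm' h), Or.inr ⟨hb, ha⟩]
    · rintro a b c (hab | ⟨ha, hb⟩) (hbc | ⟨hb', hc⟩)
      · exact Or.inl (π.trans' hab hbc)
      · exact Or.inr ⟨hb'.imp (π.trans' hab) (π.trans' hab), hc⟩
      · exact Or.inr ⟨ha, hb.imp (π.trans' (π.symm' hbc)) (π.trans' (π.symm' hbc))⟩
      · exact Or.inr ⟨ha, hc⟩

lemma merge_apply {π : Setoid α} {x y a b : α} :
    merge π x y a b ↔ π a b ∨ ((π a x ∨ π a y) ∧ (π b x ∨ π b y)) := Iff.rfl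

lemma le_merge (π : Setoid α) (x y : α) : π ≤ merge π x y := fun _ _ h => Or.inl h

lemma merge_rel (π : Setoid α) (x y : α) : merge π x y x y :=
  Or.inr ⟨Or.inl (π.refl' x), Or.inr (π.refl' y)⟩

lemma merge_le {ρ π : Setoid α} (h : ρ ≤ π) {x y : α} (hxy : π x y) : merge ρ x y ≤ π := by
  have rel_x : ∀ a, ρ a x ∨ ρ a y → π a x := fun a ha =>
    ha.elim (fun hax => h hax) (fun hay => π.trans' (h hay) (π.symm' hxy))
  rintro a b (hab | ⟨ha, hb⟩)
  exacts [h hab, π.trans' (rel_x a ha) (π.symm' (rel_x b hb))]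

lemma merge_le_iff {ρ π : Setoid α} {x y : α} : merge ρ x y ≤ π ↔ ρ ≤ π ∧ π x y :=
  ⟨fun h => ⟨(le_merge ρ x y).trans h, h (merge_rel ρ x y)⟩, fun h => merge_le h.1 h.2⟩

lemma merge_eq_self {π : Setoid α} {x y : α} (hxy : π x y) : merge π x y = π :=
  le_antisymm (merge_le le_rfl hxy) (le_merge π x y)

lemma merge_mono {ρ π : Setoid α} (h : ρ ≤ π) (x y : α) : merge ρ x y ≤ merge π x y :=
  merge_le (h.trans (le_merge π x y)) (merge_rel π x y)

variable [Fintype α] [DecidableEq α]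

/-- The finite partition of the underlying type into the classes of `π`. -/
noncomputable def partition (π : Setoid α) : Finpartition (univ : Finset α) := by
  classical exact Finpartition.ofSetoid π

/-- The set of classes of `π`. -/
noncomputable def blocks (π : Setoid α) : Finset (Finset α) := (partition π).parts

/-- The class of `x` under `π`, as a finite set. -/
noncomputable def block (π : Setoid α) (x : α) : Finset α := (partition π).part x

lemma mem_block {π : Setoid α} {x z : α} : z ∈ block π x ↔ π x z := by
  classical
  rw [block, partition, Finpartition.mem_part_ofSetoid_iff_rel]

lemma mem_block_self (π : Setoid α) (x : α) : x ∈ block π x := mem_block.2 (π.refl' x)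

lemma block_mem_blocks (π : Setoid α) (x : α) : block π x ∈ blocks π :=
  (partition π).part_mem.2 (mem_univ x)

lemma block_eq_of_mem {π : Setoid α} {c : Finset α} (hc : c ∈ blocks π) {x : α} (hx : x ∈ c) :
    block π x = c := (partition π).part_eq_of_mem hc hx

lemma nonempty_of_mem_blocks {π : Setoid α} {c : Finset α} (hc : c ∈ blocks π) : c.Nonempty :=
  (partition π).nonempty_of_mem_parts hc

lemma mem_blocks {π : Setoid α} {c : Finset α} : c ∈ blocks π ↔ ∃ x, block π x = c := by
  refine ⟨fun hc => ?_, ?_⟩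
  · obtain ⟨x, hx⟩ := nonempty_of_mem_blocks hc
    exact ⟨x, block_eq_of_mem hc hx⟩
  · rintro ⟨x, rfl⟩
    exact block_mem_blocks π x

lemma block_eq_block {π : Setoid α} {x z : α} : block π x = block π z ↔ π x z :=
  ⟨fun h => mem_block.1 (h ▸ mem_block_self π z),
    fun h => (block_eq_of_mem (block_mem_blocks π x) (mem_block.2 h)).symm⟩

lemma block_ne_block {π : Setoid α} {x z : α} (h : ¬ π x z) : block π x ≠ block π z :=
  fun heq => h (block_eq_block.1 heq)

lemma disjoint_block {π : Setoid α} {x y : α} (h : ¬ π x y) : Disjoint (block π x) (block π y) :=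
  (partition π).disjoint (block_mem_blocks π x) (block_mem_blocks π y) (block_ne_block h)

lemma block_subset_block {ρ π : Setoid α} (h : ρ ≤ π) (x : α) : block ρ x ⊆ block π x :=
  fun _ hz => mem_block.2 (h (mem_block.1 hz))

lemma sum_card_blocks (π : Setoid α) : ∑ B ∈ blocks π, #B = Fintype.card α :=
  (partition π).sum_card_parts

lemma block_bot (x : α) : block (⊥ : Setoid α) x = {x} := by
  ext z
  rw [mem_block, mem_singleton, Setoid.bot_def, eq_comm]

lemma block_top (x : α) : block (⊤ : Setoid α) x = univ := by
  ext z
  simp [mem_block, Setoid.top_def]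

lemma blocks_top [Nonempty α] : blocks (⊤ : Setoid α) = {univ} := by
  ext c
  simp only [mem_blocks, block_top, exists_const, mem_singleton, eq_comm]

lemma blocks_eq_image (π : Setoid α) : blocks π = univ.image (block π) := by
  ext c
  simp [mem_blocks]

lemma card_eq_one_of_mem_blocks_bot {c : Finset α} (hc : c ∈ blocks (⊥ : Setoid α)) : #c = 1 := by
  obtain ⟨x, rfl⟩ := mem_blocks.1 hc
  rw [block_bot, card_singleton]

lemma card_blocks_bot : #(blocks (⊥ : Setoid α)) = Fintype.card α := by
  rw [blocks_eq_image, card_image_of_injective, card_univ]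
  intro x y h
  rwa [block_bot, block_bot, singleton_inj] at h

lemma eq_bot_of_card_le_card_blocks {π : Setoid α} (h : Fintype.card α ≤ #(blocks π)) :
    π = ⊥ := by
  have injective : Set.InjOn (block π) (univ : Finset α) := by
    refine injOn_of_card_image_eq (le_antisymm card_image_le ?_)
    rwa [← blocks_eq_image, card_univ]
  exact eq_bot_iff.2 fun a b hab =>
    injective (mem_coe.2 (mem_univ a)) (mem_coe.2 (mem_univ b)) (block_eq_block.2 hab)

lemma block_merge_left (ρ : Setoid α) (x y : α) :
    block (merge ρ x y) x = block ρ x ∪ block ρ y := by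
  ext z
  have hx : ρ x x := ρ.refl' x
  have comm : ∀ w, ρ z w ↔ ρ w z := fun w => ⟨ρ.symm', ρ.symm'⟩
  simp only [mem_union, mem_block, merge_apply, comm]
  tauto

lemma block_merge_of_not_rel {ρ : Setoid α} {x y a : α} (hx : ¬ ρ a x) (hy : ¬ ρ a y) :
    block (merge ρ x y) a = block ρ a := by
  ext z
  simp only [mem_block, merge_apply]
  tauto

lemma blocks_merge (ρ : Setoid α) (x y : α) :
    blocks (merge ρ x y) =
      insert (block ρ x ∪ block ρ y) (((blocks ρ).erase (block ρ x)).erase (block ρ y)) := by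
  ext c
  simp only [mem_insert, mem_erase]
  constructor
  · rw [mem_blocks]
    rintro ⟨a, rfl⟩
    by_cases h : ρ a x ∨ ρ a y
    · left
      rw [← block_merge_left, block_eq_block]
      exact Or.inr ⟨h, Or.inl (ρ.refl' x)⟩
    · obtain ⟨hx, hy⟩ := not_or.1 h
      rw [block_merge_of_not_rel hx hy]
      exact Or.inr ⟨block_ne_block hy, block_ne_block hx, block_mem_blocks ρ a⟩
  · rintro (rfl | ⟨hy, hx, hc⟩)
    · rw [← block_merge_left]
      exact block_mem_blocks _ x
    · obtain ⟨a, rfl⟩ := mem_blocks.1 hc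
      rw [← block_merge_of_not_rel (fun h => hx (block_eq_block.2 h))
        (fun h => hy (block_eq_block.2 h))]
      exact block_mem_blocks _ a

lemma union_notMem_blocks {ρ : Setoid α} {x y : α} (h : ¬ ρ x y) :
    block ρ x ∪ block ρ y ∉ blocks ρ := fun hc =>
  block_ne_block h ((block_eq_of_mem hc (mem_union_left _ (mem_block_self ρ x))).trans
    (block_eq_of_mem hc (mem_union_right _ (mem_block_self ρ y))).symm)

lemma prod_blocks_merge {M : Type*} [CommMonoid M] {ρ : Setoid α} {x y : α} (h : ¬ ρ x y)
    (f : Finset α → M) :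
    (∏ c ∈ blocks (merge ρ x y), f c) * (f (block ρ x) * f (block ρ y)) =
      (∏ c ∈ blocks ρ, f c) * f (block ρ x ∪ block ρ y) := by
  have hy : block ρ y ∈ (blocks ρ).erase (block ρ x) :=
    mem_erase.2 ⟨(block_ne_block h).symm, block_mem_blocks ρ y⟩
  rw [blocks_merge, prod_insert, ← mul_prod_erase (blocks ρ) f (block_mem_blocks ρ x),
    ← mul_prod_erase _ f hy]
  · ac_rfl
  · exact fun hc => union_notMem_blocks h (mem_of_mem_erase (mem_of_mem_erase hc))

lemma card_blocks_merge {ρ : Setoid α} {x y : α} (h : ¬ ρ x y) :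
    #(blocks (merge ρ x y)) + 1 = #(blocks ρ) := by
  have hy : block ρ y ∈ (blocks ρ).erase (block ρ x) :=
    mem_erase.2 ⟨(block_ne_block h).symm, block_mem_blocks ρ y⟩
  rw [blocks_merge, card_insert_of_notMem, card_erase_add_one hy,
    card_erase_add_one (block_mem_blocks ρ x)]
  exact fun hc => union_notMem_blocks h (mem_of_mem_erase (mem_of_mem_erase hc))

lemma card_blocks_le_card_blocks_merge_add_one (ρ : Setoid α) (x y : α) :
    #(blocks ρ) ≤ #(blocks (merge ρ x y)) + 1 := by
  by_cases h : ρ x y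
  · rw [merge_eq_self h]
    omega
  · rw [card_blocks_merge h]

/-- The classes of `ρ` contained in `B`. -/
noncomputable def blocksIn (ρ : Setoid α) (B : Finset α) : Finset (Finset α) :=
  {c ∈ blocks ρ | c ⊆ B}

lemma mem_blocksIn {ρ : Setoid α} {B c : Finset α} :
    c ∈ blocksIn ρ B ↔ c ∈ blocks ρ ∧ c ⊆ B := mem_filter

lemma blocksIn_subset (ρ : Setoid α) (B : Finset α) : blocksIn ρ B ⊆ blocks ρ :=
  filter_subset _ _

lemma blocksIn_univ (ρ : Setoid α) : blocksIn ρ univ = blocks ρ := by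
  simp [blocksIn]

/-- The set `B` is a union of classes of `ρ`. -/
def IsSaturated (ρ : Setoid α) (B : Finset α) : Prop := ∀ ⦃a b⦄, ρ a b → a ∈ B → b ∈ B

lemma isSaturated_of_mem_blocks {ρ π : Setoid α} (h : ρ ≤ π) {B : Finset α} (hB : B ∈ blocks π) :
    IsSaturated ρ B := fun a b hab ha => by
  rw [← block_eq_of_mem hB ha]
  exact mem_block.2 (h hab)

lemma isSaturated_block {ρ π : Setoid α} (h : ρ ≤ π) (x : α) : IsSaturated ρ (block π x) :=
  isSaturated_of_mem_blocks h (block_mem_blocks π x)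

namespace IsSaturated

variable {ρ : Setoid α} {B : Finset α}

lemma block_subset (h : IsSaturated ρ B) {x : α} (hx : x ∈ B) : block ρ x ⊆ B :=
  fun _ hz => h (mem_block.1 hz) hx

lemma block_mem_blocksIn (h : IsSaturated ρ B) {x : α} (hx : x ∈ B) : block ρ x ∈ blocksIn ρ B :=
  mem_blocksIn.2 ⟨block_mem_blocks ρ x, h.block_subset hx⟩

lemma biUnion_blocksIn (h : IsSaturated ρ B) : (blocksIn ρ B).biUnion id = B := by
  ext z
  simp only [mem_biUnion, id]
  exact ⟨fun ⟨c, hc, hz⟩ => (mem_blocksIn.1 hc).2 hz,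
    fun hz => ⟨block ρ z, h.block_mem_blocksIn hz, mem_block_self ρ z⟩⟩

lemma sum_blocksIn (h : IsSaturated ρ B) {M : Type*} [AddCommMonoid M] (f : α → M) :
    ∑ c ∈ blocksIn ρ B, ∑ x ∈ c, f x = ∑ x ∈ B, f x := by
  conv_rhs => rw [← h.biUnion_blocksIn]
  exact (sum_biUnion ((partition ρ).disjoint.subset (coe_subset.2 (blocksIn_subset ρ B)))).symm

lemma sum_card_blocksIn (h : IsSaturated ρ B) : ∑ c ∈ blocksIn ρ B, #c = #B := by
  simpa only [card_eq_sum_ones] using h.sum_blocksIn (fun _ => 1)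

lemma blocksIn_merge (h : IsSaturated ρ B) {x y : α} (hx : x ∈ B) (hy : y ∈ B) :
    blocksIn (merge ρ x y) B =
      insert (block ρ x ∪ block ρ y) (((blocksIn ρ B).erase (block ρ x)).erase (block ρ y)) := by
  have union_subset_B : block ρ x ∪ block ρ y ⊆ B :=
    union_subset (h.block_subset hx) (h.block_subset hy)
  rw [blocksIn, blocks_merge, filter_insert, if_pos union_subset_B, filter_erase, filter_erase,
    blocksIn]

lemma card_blocksIn_merge (h : IsSaturated ρ B) {x y : α} (hx : x ∈ B) (hy : y ∈ B)
    (hxy : ¬ ρ x y) : #(blocksIn (merge ρ x y) B) + 1 = #(blocksIn ρ B) := by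
  have hy' : block ρ y ∈ (blocksIn ρ B).erase (block ρ x) :=
    mem_erase.2 ⟨(block_ne_block hxy).symm, h.block_mem_blocksIn hy⟩
  rw [h.blocksIn_merge hx hy, card_insert_of_notMem, card_erase_add_one hy',
    card_erase_add_one (h.block_mem_blocksIn hx)]
  exact fun hc => union_notMem_blocks hxy
    (blocksIn_subset ρ B (mem_of_mem_erase (mem_of_mem_erase hc)))

end IsSaturated

lemma blocksIn_merge_of_notMem {ρ : Setoid α} {x y : α} {B : Finset α} (hx : x ∉ B)
    (hy : y ∉ B) : blocksIn (merge ρ x y) B = blocksIn ρ B := by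
  have notMem : ∀ {z : α}, z ∉ B → block ρ z ∉ blocksIn ρ B := fun hz hc =>
    hz ((mem_blocksIn.1 hc).2 (mem_block_self ρ _))
  rw [blocksIn, blocks_merge, filter_insert, if_neg, filter_erase, filter_erase]
  · exact (erase_eq_of_notMem fun hc => notMem hy (mem_of_mem_erase hc)).trans
      (erase_eq_of_notMem (notMem hx))
  · exact fun hc => hx (hc (mem_union_left _ (mem_block_self ρ x)))

lemma sum_blocks (ρ : Setoid α) {M : Type*} [AddCommMonoid M] (f : α → M) :
    ∑ c ∈ blocks ρ, ∑ x ∈ c, f x = ∑ x, f x := by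
  have saturated : IsSaturated ρ univ := fun _ b _ _ => mem_univ b
  rw [← blocksIn_univ, saturated.sum_blocksIn]

lemma sum_card_blocksIn_blocks {ρ π : Setoid α} (h : ρ ≤ π) :
    ∑ B ∈ blocks π, #(blocksIn ρ B) = #(blocks ρ) := by
  rw [← card_biUnion]
  · congr 1
    ext c
    simp only [mem_biUnion, mem_blocksIn]
    refine ⟨fun ⟨_, _, hc, _⟩ => hc, fun hc => ?_⟩
    obtain ⟨x, rfl⟩ := mem_blocks.1 hc
    exact ⟨block π x, block_mem_blocks π x, hc, block_subset_block h x⟩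
  · intro B hB B' hB' hne
    refine disjoint_left.2 fun c hc hc' => hne ?_
    obtain ⟨hcρ, hcB⟩ := mem_blocksIn.1 hc
    obtain ⟨z, hz⟩ := nonempty_of_mem_blocks hcρ
    exact (block_eq_of_mem hB (hcB hz)).symm.trans
      (block_eq_of_mem hB' ((mem_blocksIn.1 hc').2 hz))

lemma card_blocksIn_pos {ρ π : Setoid α} (h : ρ ≤ π) {B : Finset α} (hB : B ∈ blocks π) :
    0 < #(blocksIn ρ B) := by
  obtain ⟨x, hx⟩ := nonempty_of_mem_blocks hB
  exact card_pos.2 ⟨_, (isSaturated_of_mem_blocks h hB).block_mem_blocksIn hx⟩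

lemma card_blocks_anti {ρ π : Setoid α} (h : ρ ≤ π) : #(blocks π) ≤ #(blocks ρ) := by
  rw [← sum_card_blocksIn_blocks h, card_eq_sum_ones]
  exact sum_le_sum fun B hB => card_blocksIn_pos h hB

section UnionOfBlocks

variable {ρ : Setoid α} {T : Finset (Finset α)}

lemma mem_biUnion_iff_block_mem (hT : T ⊆ blocks ρ) {z : α} :
    z ∈ T.biUnion id ↔ block ρ z ∈ T := by
  simp only [mem_biUnion, id]
  refine ⟨fun ⟨c, hc, hz⟩ => ?_, fun h => ⟨_, h, mem_block_self ρ z⟩⟩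
  rwa [block_eq_of_mem (hT hc) hz]

lemma isSaturated_biUnion (hT : T ⊆ blocks ρ) : IsSaturated ρ (T.biUnion id) := by
  intro a b hab ha
  rw [mem_biUnion_iff_block_mem hT] at ha ⊢
  rwa [← block_eq_block.2 hab]

lemma blocksIn_biUnion (hT : T ⊆ blocks ρ) : blocksIn ρ (T.biUnion id) = T := by
  ext c
  rw [mem_blocksIn]
  refine ⟨fun ⟨hc, hsub⟩ => ?_, fun hc => ⟨hT hc, subset_biUnion_of_mem id hc⟩⟩
  obtain ⟨z, hz⟩ := nonempty_of_mem_blocks hc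
  rw [← block_eq_of_mem hc hz]
  exact (mem_biUnion_iff_block_mem hT).1 (hsub hz)

end UnionOfBlocks

end Blocks

section Splitting

open Finset

variable {α : Type*}

/-- The equivalence relation refining `π` by separating the elements of `B` from the others. -/
def split (π : Setoid α) (B : Finset α) : Setoid α where
  r a b := π a b ∧ (a ∈ B ↔ b ∈ B)
  iseqv := ⟨fun a => ⟨π.refl' a, Iff.rfl⟩, fun h => ⟨π.symm' h.1, h.2.symm⟩,
    fun h h' => ⟨π.trans' h.1 h'.1, h.2.trans h'.2⟩⟩

lemma split_apply {π : Setoid α} {B : Finset α} {a b : α} :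
    split π B a b ↔ π a b ∧ (a ∈ B ↔ b ∈ B) := Iff.rfl

lemma split_le (π : Setoid α) (B : Finset α) : split π B ≤ π := fun _ _ h => h.1

lemma not_split_apply {π : Setoid α} {B : Finset α} {x y : α} (hx : x ∈ B) (hy : y ∉ B) :
    ¬ split π B x y := fun h => hy (h.2.1 hx)

variable [Fintype α] [DecidableEq α]

noncomputable instance : Fintype (Setoid α) :=
  have : Finite (Setoid α) :=
    Finite.of_injective (fun π : Setoid α => π.r) fun _ _ h => Setoid.eq_iff_rel_eq.2 h
  Fintype.ofFinite _

lemma merge_split {π : Setoid α} {B : Finset α} {x y : α} (hxy : π x y) (hB : B ⊆ block π x)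
    (hx : x ∈ B) (hy : y ∉ B) : merge (split π B) x y = π := by
  refine le_antisymm (merge_le (split_le π B) hxy) fun a b hab => ?_
  have rel_x_or_y : ∀ c, π c x → split π B c x ∨ split π B c y := fun c hc => by
    by_cases hcB : c ∈ B
    · exact Or.inl ⟨hc, iff_of_true hcB hx⟩
    · exact Or.inr ⟨π.trans' hc hxy, iff_of_false hcB hy⟩
  have rel_x : ∀ c ∈ B, π c x := fun c hc => π.symm' (mem_block.1 (hB hc))
  by_cases h : a ∈ B ↔ b ∈ B
  · exact Or.inl ⟨hab, h⟩
  · have hax : π a x := by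
      by_cases ha : a ∈ B
      · exact rel_x a ha
      · exact π.trans' hab (rel_x b (by tauto))
    exact Or.inr ⟨rel_x_or_y a hax, rel_x_or_y b (π.trans' (π.symm' hab) hax)⟩

lemma split_merge_block {π : Setoid α} {x y : α} (h : ¬ π x y) :
    split (merge π x y) (block π x) = π := by
  ext a b
  rw [split_apply, merge_apply, mem_block, mem_block]
  constructor
  · rintro ⟨hab | ⟨ha | ha, hb | hb⟩, hiff⟩
    · exact hab
    · exact π.trans' ha (π.symm' hb)
    · exact absurd (π.trans' (hiff.1 (π.symm' ha)) hb) h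
    · exact absurd (π.trans' (hiff.2 (π.symm' hb)) ha) h
    · exact π.trans' ha (π.symm' hb)
  · exact fun hab => ⟨Or.inl hab, fun hxa => π.trans' hxa hab,
      fun hxb => π.trans' hxb (π.symm' hab)⟩

lemma block_split_left {π : Setoid α} {B : Finset α} {x : α} (hB : B ⊆ block π x) (hx : x ∈ B) :
    block (split π B) x = B := by
  ext z
  rw [mem_block, split_apply]
  exact ⟨fun h => h.2.1 hx, fun hz => ⟨mem_block.1 (hB hz), iff_of_true hx hz⟩⟩

lemma block_split_right {π : Setoid α} {B : Finset α} {x y : α} (hxy : π x y) (hy : y ∉ B) :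
    block (split π B) y = block π x \ B := by
  ext z
  rw [mem_block, split_apply, mem_sdiff, mem_block]
  exact ⟨fun h => ⟨π.trans' hxy h.1, fun hz => hy (h.2.2 hz)⟩,
    fun h => ⟨π.trans' (π.symm' hxy) h.1, iff_of_false hy h.2⟩⟩

/-- The classes of `ρ` inside the class of `x` under `π`, other than those of `x` and `y`. When `π`
relates `x` and `y` and is cut into two between them, these classes can be distributed freely. -/
noncomputable def freeBlocks (ρ π : Setoid α) (x y : α) : Finset (Finset α) :=
  ((blocksIn ρ (block π x)).erase (block ρ x)).erase (block ρ y)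

/-- The union of the class of `x` with the classes in `S`. -/
noncomputable def side (ρ : Setoid α) (x : α) (S : Finset (Finset α)) : Finset α :=
  (insert (block ρ x) S).biUnion id

section Side

variable {ρ π : Setoid α} {x y : α} {S : Finset (Finset α)}

lemma freeBlocks_subset : freeBlocks ρ π x y ⊆ blocks ρ :=
  (erase_subset _ _).trans ((erase_subset _ _).trans (blocksIn_subset _ _))

lemma block_left_notMem_freeBlocks : block ρ x ∉ freeBlocks ρ π x y :=
  fun h => notMem_erase _ _ (mem_of_mem_erase h)

lemma block_right_notMem_freeBlocks : block ρ y ∉ freeBlocks ρ π x y := notMem_erase _ _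

lemma insert_block_subset (hS : S ⊆ blocks ρ) : insert (block ρ x) S ⊆ blocks ρ :=
  insert_subset (block_mem_blocks ρ x) hS

lemma mem_side_self : x ∈ side ρ x S :=
  mem_biUnion.2 ⟨_, mem_insert_self _ _, mem_block_self ρ x⟩

lemma blocksIn_side (hS : S ⊆ blocks ρ) : blocksIn ρ (side ρ x S) = insert (block ρ x) S :=
  blocksIn_biUnion (insert_block_subset hS)

lemma notMem_side (hn : ¬ ρ x y) (hS : S ⊆ freeBlocks ρ π x y) : y ∉ side ρ x S := by
  rw [side, mem_biUnion_iff_block_mem (insert_block_subset (hS.trans freeBlocks_subset)),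
    mem_insert, not_or]
  exact ⟨(block_ne_block hn).symm, fun h => block_right_notMem_freeBlocks (hS h)⟩

lemma card_side (hS : S ⊆ blocks ρ) (hx : block ρ x ∉ S) :
    #(side ρ x S) = #(block ρ x) + ∑ c ∈ S, #c := by
  rw [side, ← (isSaturated_biUnion (insert_block_subset hS)).sum_card_blocksIn,
    blocksIn_biUnion (insert_block_subset hS), sum_insert hx]

lemma filter_freeBlocks_subset_side (hS : S ⊆ freeBlocks ρ π x y) :
    {d ∈ freeBlocks ρ π x y | d ⊆ side ρ x S} = S := by
  ext d
  rw [mem_filter]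
  constructor
  · rintro ⟨hd, hsub⟩
    have hmem : d ∈ insert (block ρ x) S := by
      rw [← blocksIn_side (hS.trans freeBlocks_subset)]
      exact mem_blocksIn.2 ⟨freeBlocks_subset hd, hsub⟩
    refine (mem_insert.1 hmem).resolve_left ?_
    rintro rfl
    exact block_left_notMem_freeBlocks hd
  · exact fun hd => ⟨hS hd, subset_biUnion_of_mem id (mem_insert_of_mem hd)⟩

lemma side_filter_freeBlocks {π' : Setoid α} (hmerge : merge π' x y = π) (hn : ¬ π' x y)
    (hle : ρ ≤ π') : side ρ x {d ∈ freeBlocks ρ π x y | d ⊆ block π' x} = block π' x := by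
  have key : insert (block ρ x) {d ∈ freeBlocks ρ π x y | d ⊆ block π' x} =
      blocksIn ρ (block π' x) := by
    have block_le : block π' x ⊆ block π x :=
      block_subset_block (hmerge ▸ le_merge π' x y) x
    have right_notMem : ¬ block ρ y ⊆ block π' x := fun h =>
      hn (mem_block.1 (h (mem_block_self ρ y)))
    ext d
    simp only [freeBlocks, mem_insert, mem_filter, mem_erase, mem_blocksIn]
    refine ⟨?_, fun ⟨hd, hsub⟩ => ?_⟩
    · rintro (rfl | ⟨⟨-, -, hd, -⟩, hsub⟩)
      exacts [⟨block_mem_blocks ρ x, block_subset_block hle x⟩, ⟨hd, hsub⟩]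
    · refine or_iff_not_imp_left.2 fun hne => ⟨⟨?_, hne, hd, hsub.trans block_le⟩, hsub⟩
      rintro rfl
      exact right_notMem hsub
  rw [side, key, (isSaturated_block hle x).biUnion_blocksIn]

variable (hρ : ρ ≤ π)
include hρ

lemma insert_insert_freeBlocks (hxy : π x y) (hn : ¬ ρ x y) :
    insert (block ρ x) (insert (block ρ y) (freeBlocks ρ π x y)) = blocksIn ρ (block π x) := by
  have saturated := isSaturated_block hρ x
  rw [freeBlocks, insert_erase, insert_erase]
  · exact saturated.block_mem_blocksIn (mem_block_self π x)
  · exact mem_erase.2 ⟨(block_ne_block hn).symm, saturated.block_mem_blocksIn (mem_block.2 hxy)⟩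

lemma side_subset (hS : S ⊆ freeBlocks ρ π x y) : side ρ x S ⊆ block π x := by
  refine biUnion_subset.2 fun c hc => ?_
  rcases mem_insert.1 hc with rfl | hc
  · exact block_subset_block hρ x
  · exact (mem_blocksIn.1 (mem_of_mem_erase (mem_of_mem_erase (hS hc)))).2

lemma sdiff_side (hxy : π x y) (hn : ¬ ρ x y) (hS : S ⊆ freeBlocks ρ π x y) :
    block π x \ side ρ x S = side ρ y (freeBlocks ρ π x y \ S) := by
  ext z
  have mem_blockπ : z ∈ block π x ↔ block ρ z ∈ blocksIn ρ (block π x) := by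
    rw [← mem_biUnion_iff_block_mem (blocksIn_subset _ _),
      (isSaturated_block hρ x).biUnion_blocksIn]
  rw [mem_sdiff, mem_blockπ, ← insert_insert_freeBlocks hρ hxy hn, side, side,
    mem_biUnion_iff_block_mem (insert_block_subset (hS.trans freeBlocks_subset)),
    mem_biUnion_iff_block_mem (insert_block_subset (sdiff_subset.trans freeBlocks_subset))]
  simp only [mem_insert, mem_sdiff]
  have hne := block_ne_block hn
  have hx : block ρ x ∉ freeBlocks ρ π x y := block_left_notMem_freeBlocks
  have hy : block ρ y ∉ S := fun h => block_right_notMem_freeBlocks (hS h)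
  grind

open Classical in
lemma sum_separating {M : Type*} [AddCommMonoid M] (hxy : π x y) (hn : ¬ ρ x y)
    (F : Setoid α → M) :
    ∑ π' with merge π' x y = π ∧ ¬ π' x y ∧ ρ ≤ π', F π' =
      ∑ S ∈ (freeBlocks ρ π x y).powerset, F (split π (side ρ x S)) := by
  symm
  refine sum_bij' (fun S _ => split π (side ρ x S))
    (fun π' _ => {d ∈ freeBlocks ρ π x y | d ⊆ block π' x}) (fun S hS => ?_)
    (fun π' _ => mem_powerset.2 (filter_subset _ _)) (fun S hS => ?_) (fun π' hπ' => ?_)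
    fun _ _ => rfl
  · have hS := mem_powerset.1 hS
    have saturated : IsSaturated ρ (side ρ x S) :=
      isSaturated_biUnion (insert_block_subset (hS.trans freeBlocks_subset))
    refine mem_filter.2 ⟨mem_univ _, ?_, not_split_apply mem_side_self (notMem_side hn hS),
      fun a b hab => ⟨hρ hab, saturated hab, saturated (ρ.symm' hab)⟩⟩
    exact merge_split hxy (side_subset hρ hS) mem_side_self (notMem_side hn hS)
  · have hS := mem_powerset.1 hS
    rw [block_split_left (side_subset hρ hS) mem_side_self, filter_freeBlocks_subset_side hS]
  · obtain ⟨-, hmerge, hn', hle⟩ := mem_filter.1 hπ'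
    rw [side_filter_freeBlocks hmerge hn' hle, ← hmerge, split_merge_block hn']

end Side

end Splitting

section Weights

open Finset

variable {α : Type*} [Fintype α] [DecidableEq α]

/-- The weight `|B| ^ (l - 3)` of a class `B` of an equivalence relation, where `l` is the number of
classes of the finer relation `ρ` inside `B`. -/
noncomputable def blockWeight (ρ : Setoid α) (B : Finset α) : ℚ :=
  (#B : ℚ) ^ ((#(blocksIn ρ B) : ℤ) - 3)

/-- The factor contributed by the classes of `π` to the number of minimal transposition
factorizations with orbit relation `π` of a permutation with cycle relation `ρ`. -/
noncomputable def blockProd (ρ π : Setoid α) : ℚ := ∏ B ∈ blocks π, blockWeight ρ B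

/-- The factor contributed by the cycles to the number of minimal transposition factorizations of a
permutation with cycle relation `ρ`. -/
noncomputable def cycleProd (ρ : Setoid α) : ℚ := ∏ c ∈ blocks ρ, cycleWeight #c

lemma card_block_pos (ρ : Setoid α) (x : α) : 0 < #(block ρ x) :=
  card_pos.2 ⟨x, mem_block_self ρ x⟩

lemma cycleWeight_card_block_pos (ρ : Setoid α) (x : α) : 0 < cycleWeight #(block ρ x) :=
  cycleWeight_pos (card_block_pos ρ x)

lemma card_union_block {ρ : Setoid α} {x y : α} (h : ¬ ρ x y) :
    #(block ρ x ∪ block ρ y) = #(block ρ x) + #(block ρ y) :=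
  card_union_of_disjoint (disjoint_block h)

lemma blockProd_eq_mul (ρ π : Setoid α) (x : α) :
    blockProd ρ π = blockWeight ρ (block π x) *
      ∏ B ∈ (blocks π).erase (block π x), blockWeight ρ B :=
  (mul_prod_erase _ _ (block_mem_blocks π x)).symm

lemma cycleProd_merge {ρ : Setoid α} {x y : α} (h : ¬ ρ x y) :
    cycleProd (merge ρ x y) = cycleProd ρ * (cycleWeight (#(block ρ x) + #(block ρ y)) /
      (cycleWeight #(block ρ x) * cycleWeight #(block ρ y))) := by
  have hprod := prod_blocks_merge h fun c => cycleWeight #c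
  rw [card_union_block h] at hprod
  have := (cycleWeight_card_block_pos ρ x).ne'
  have := (cycleWeight_card_block_pos ρ y).ne'
  rw [mul_div_assoc', eq_div_iff (by positivity)]
  exact hprod

lemma blockWeight_merge_of_mem_erase {ρ π : Setoid α} {x y : α} (hxy : π x y) {B : Finset α}
    (hB : B ∈ (blocks π).erase (block π x)) :
    blockWeight (merge ρ x y) B = blockWeight ρ B := by
  obtain ⟨hne, hB⟩ := mem_erase.1 hB
  rw [blockWeight, blocksIn_merge_of_notMem, blockWeight]
  · exact fun hx => hne (block_eq_of_mem hB hx).symm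
  · exact fun hy => hne ((block_eq_of_mem hB hy).symm.trans (block_eq_block.2 hxy).symm)

lemma blockProd_merge {ρ π : Setoid α} (hρ : ρ ≤ π) {x y : α} (hxy : π x y) (h : ¬ ρ x y) :
    blockProd (merge ρ x y) π = (∏ B ∈ (blocks π).erase (block π x), blockWeight ρ B) *
      (#(block π x) : ℚ) ^ ((#(blocksIn ρ (block π x)) : ℤ) - 4) := by
  rw [blockProd_eq_mul _ _ x, prod_congr rfl fun B hB => blockWeight_merge_of_mem_erase hxy hB,
    mul_comm, blockWeight, ← (isSaturated_block hρ x).card_blocksIn_merge (mem_block_self π x)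
      (mem_block.2 hxy) h]
  push_cast
  ring_nf

lemma freeBlocks_eq_erase_merge {ρ π : Setoid α} (hρ : ρ ≤ π) {x y : α} (hxy : π x y)
    (h : ¬ ρ x y) :
    freeBlocks ρ π x y = (blocksIn (merge ρ x y) (block π x)).erase (block (merge ρ x y) x) := by
  rw [(isSaturated_block hρ x).blocksIn_merge (mem_block_self π x) (mem_block.2 hxy),
    block_merge_left, erase_insert, freeBlocks]
  exact fun hc => union_notMem_blocks h (freeBlocks_subset (π := π) hc)

lemma blockWeight_side {ρ : Setoid α} {x : α} {S : Finset (Finset α)} (hS : S ⊆ blocks ρ)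
    (hx : block ρ x ∉ S) :
    blockWeight ρ (side ρ x S) = (#(block ρ x) + ∑ c ∈ S, (#c : ℚ)) ^ ((#S : ℤ) - 2) := by
  rw [blockWeight, blocksIn_side hS, card_side hS hx, card_insert_of_notMem hx]
  push_cast
  ring_nf

lemma blockProd_split_side {ρ π : Setoid α} (hρ : ρ ≤ π) {x y : α} (hxy : π x y) (hn : ¬ ρ x y)
    {S : Finset (Finset α)} (hS : S ⊆ freeBlocks ρ π x y) :
    blockProd ρ (split π (side ρ x S)) =
      (∏ B ∈ (blocks π).erase (block π x), blockWeight ρ B) *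
        (blockWeight ρ (side ρ x S) * blockWeight ρ (side ρ y (freeBlocks ρ π x y \ S))) := by
  have hsub := side_subset hρ hS
  have hy := notMem_side hn hS
  have weight_ne_zero : blockWeight ρ (block π x) ≠ 0 := by
    have := card_block_pos π x
    rw [blockWeight]
    positivity
  have hprod := prod_blocks_merge (not_split_apply (π := π) mem_side_self hy) (blockWeight ρ)
  rw [merge_split hxy hsub mem_side_self hy, block_split_left hsub mem_side_self,
    block_split_right hxy hy, union_sdiff_of_subset hsub, sdiff_side hρ hxy hn hS,
    ← blockProd, ← blockProd, blockProd_eq_mul ρ π x] at hprod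
  refine mul_right_cancel₀ weight_ne_zero (hprod.symm.trans ?_)
  ring

open Classical in
lemma sum_separating_blockProd {ρ π : Setoid α} (hρ : ρ ≤ π) {x y : α} (hxy : π x y)
    (hn : ¬ ρ x y) (p : ℤ) :
    ∑ π' with merge π' x y = π ∧ ¬ π' x y ∧ ρ ≤ π',
        blockProd ρ π' * (#(block π' x) : ℚ) ^ (-p) =
      (∏ B ∈ (blocks π).erase (block π x), blockWeight ρ B) *
        abelSum (fun c : Finset α => (#c : ℚ)) (p + 2) 2 (freeBlocks ρ π x y)
          #(block ρ x) #(block ρ y) := by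
  rw [sum_separating hρ hxy hn, abelSum, mul_sum]
  refine sum_congr rfl fun S hS => ?_
  have hS := mem_powerset.1 hS
  have hSρ := hS.trans freeBlocks_subset
  have hx : block ρ x ∉ S := fun h => block_left_notMem_freeBlocks (hS h)
  have hy : block ρ y ∉ freeBlocks ρ π x y \ S := fun h =>
    block_right_notMem_freeBlocks (mem_sdiff.1 h).1
  have base_ne_zero : (#(block ρ x) : ℚ) + ∑ c ∈ S, (#c : ℚ) ≠ 0 := by
    have := card_block_pos ρ x
    positivity
  rw [blockProd_split_side hρ hxy hn hS, blockWeight_side hSρ hx,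
    blockWeight_side (sdiff_subset.trans freeBlocks_subset) hy,
    block_split_left (side_subset hρ hS) mem_side_self, card_side hSρ hx,
    show (#S : ℤ) - (p + 2) = (#S - 2) + -p by ring, zpow_add₀ base_ne_zero]
  push_cast
  ring

end Weights

section Cycles

open Finset Function

variable {α : Type*}

/-- The equivalence relation of lying on the same cycle of `σ`. -/
abbrev cycleRel (σ : Perm α) : Setoid α := Perm.SameCycle.setoid σ

lemma cycleRel_self_apply (σ : Perm α) (a : α) : cycleRel σ a (σ a) :=
  Perm.sameCycle_apply_right.2 (Perm.SameCycle.refl σ a)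

lemma cycleRel_one : cycleRel (1 : Perm α) = ⊥ := by
  ext a b
  exact Perm.sameCycle_one

lemma cycleRel_inv (σ : Perm α) : cycleRel σ⁻¹ = cycleRel σ := by
  ext a b
  exact Perm.sameCycle_inv

lemma eq_one_of_cycleRel_eq_bot {σ : Perm α} (h : cycleRel σ = ⊥) : σ = 1 := by
  ext a
  have ha := cycleRel_self_apply σ a
  rw [h] at ha
  exact ha.symm

lemma iterate_ne_self {σ : Perm α} {x : α} {i : ℕ} (h : 0 < i) (hi : i < minimalPeriod σ x) :
    σ^[i] x ≠ x :=
  fun hix => not_isPeriodicPt_of_pos_of_lt_minimalPeriod h.ne' hi hix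

lemma injOn_iterate (σ : Perm α) (x : α) :
    Set.InjOn (fun i => σ^[i] x) (range (minimalPeriod σ x) : Set ℕ) := by
  rw [coe_range]
  exact iterate_injOn_Iio_minimalPeriod

lemma iterate_ne_of_lt {σ : Perm α} {x : α} {a : ℕ} (ha : a < minimalPeriod σ x) {i : ℕ}
    (hi : 0 < i) (hia : i < a) : σ^[i] x ≠ x ∧ σ^[i] x ≠ σ^[a] x := by
  refine ⟨iterate_ne_self hi (hia.trans ha), fun h => hia.ne ?_⟩
  exact injOn_iterate σ x (mem_coe.2 (mem_range.2 (hia.trans ha))) (mem_coe.2 (mem_range.2 ha)) h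

section Swap

variable [DecidableEq α]

lemma iterate_swap_mul {σ : Perm α} {x y : α} {p : ℕ}
    (h : ∀ i, 0 < i → i < p → σ^[i] x ≠ x ∧ σ^[i] x ≠ y) {i : ℕ} (hi : i < p) :
    (swap x y * σ)^[i] x = σ^[i] x := by
  induction i with
  | zero => rfl
  | succ i ih =>
    obtain ⟨hx, hy⟩ := h (i + 1) (by omega) hi
    rw [iterate_succ_apply'] at hx hy ⊢
    rw [ih (by omega), Perm.mul_apply, swap_apply_of_ne_of_ne hx hy, iterate_succ_apply']

lemma iterate_swap_mul_eq {σ : Perm α} {x y : α} {p : ℕ} (hp : 0 < p)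
    (h : ∀ i, 0 < i → i < p → σ^[i] x ≠ x ∧ σ^[i] x ≠ y) :
    (swap x y * σ)^[p] x = swap x y (σ^[p] x) := by
  obtain ⟨q, rfl⟩ := Nat.exists_eq_add_one.2 hp
  rw [iterate_succ_apply', iterate_swap_mul h (Nat.lt_succ_self q), Perm.mul_apply,
    iterate_succ_apply']

end Swap

section Finite

variable [Finite α]

lemma cycleRel_iff_iterate {σ : Perm α} {a b : α} : cycleRel σ a b ↔ ∃ i : ℕ, σ^[i] a = b := by
  simp only [Perm.iterate_eq_pow]
  exact ⟨fun h => h.exists_nat_pow_eq, fun ⟨i, hi⟩ => ⟨i, by rwa [zpow_natCast]⟩⟩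

lemma cycleRel_le_iff {σ : Perm α} {π : Setoid α} : cycleRel σ ≤ π ↔ ∀ a, π a (σ a) := by
  refine ⟨fun h a => h (cycleRel_self_apply σ a), fun h a b hab => ?_⟩
  obtain ⟨i, rfl⟩ := cycleRel_iff_iterate.1 hab
  clear hab
  induction i with
  | zero => exact π.refl' _
  | succ i ih =>
    rw [iterate_succ_apply']
    exact π.trans' ih (h _)

lemma minimalPeriod_pos (σ : Perm α) (x : α) : 0 < minimalPeriod σ x :=
  minimalPeriod_pos_of_mem_periodicPts (σ.injective.mem_periodicPts x)

lemma cycleRel_iff_exists_lt {σ : Perm α} {a b : α} :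
    cycleRel σ a b ↔ ∃ i < minimalPeriod σ a, σ^[i] a = b := by
  refine cycleRel_iff_iterate.trans ⟨?_, fun ⟨i, _, hi⟩ => ⟨i, hi⟩⟩
  rintro ⟨i, rfl⟩
  exact ⟨i % minimalPeriod σ a, Nat.mod_lt _ (minimalPeriod_pos σ a), iterate_mod_minimalPeriod_eq⟩

variable [DecidableEq α]

lemma cycleRel_swap_mul_le (σ : Perm α) (x y : α) :
    cycleRel (swap x y * σ) ≤ merge (cycleRel σ) x y := by
  rw [cycleRel_le_iff]
  intro a
  have rel_apply : merge (cycleRel σ) x y a (σ a) := Or.inl (cycleRel_self_apply σ a)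
  refine (merge (cycleRel σ) x y).trans' rel_apply ?_
  rw [Perm.mul_apply]
  by_cases hx : σ a = x
  · rw [hx, swap_apply_left]
    exact merge_rel _ x y
  · by_cases hy : σ a = y
    · rw [hy, swap_apply_right]
      exact (merge _ x y).symm' (merge_rel _ x y)
    · rw [swap_apply_of_ne_of_ne hx hy]

lemma merge_cycleRel_swap_mul (σ : Perm α) (x y : α) :
    merge (cycleRel (swap x y * σ)) x y = merge (cycleRel σ) x y := by
  refine le_antisymm (merge_le (cycleRel_swap_mul_le σ x y) (merge_rel _ x y)) ?_
  have h := cycleRel_swap_mul_le (swap x y * σ) x y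
  rw [swap_mul_self_mul] at h
  exact merge_le h (merge_rel _ x y)

lemma cycleRel_le_merge {σ : Perm α} {π : Setoid α} {x y : α}
    (h : cycleRel (swap x y * σ) ≤ π) : cycleRel σ ≤ merge π x y :=
  (le_merge _ x y).trans (merge_cycleRel_swap_mul σ x y ▸ merge_mono h x y)

lemma cycleRel_swap_mul_of_not {σ : Perm α} {x y : α} (h : ¬ cycleRel σ x y) :
    cycleRel (swap x y * σ) x y := by
  refine cycleRel_iff_iterate.2 ⟨minimalPeriod σ x, ?_⟩
  rw [iterate_swap_mul_eq (minimalPeriod_pos σ x), iterate_minimalPeriod, swap_apply_left]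
  exact fun i hi hip => ⟨iterate_ne_self hi hip, fun hy => h (cycleRel_iff_iterate.2 ⟨i, hy⟩)⟩

lemma cycleRel_swap_mul_eq_merge {σ : Perm α} {x y : α} (h : ¬ cycleRel σ x y) :
    cycleRel (swap x y * σ) = merge (cycleRel σ) x y := by
  rw [← merge_cycleRel_swap_mul, merge_eq_self (cycleRel_swap_mul_of_not h)]

section Cut

variable {σ : Perm α} {x : α} {a : ℕ} (h0 : 0 < a) (ha : a < minimalPeriod σ x)
include h0 ha

lemma minimalPeriod_swap_iterate_mul : minimalPeriod (swap x (σ^[a] x) * σ : Perm α) x = a := by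
  have periodic : (swap x (σ^[a] x) * σ)^[a] x = x := by
    rw [iterate_swap_mul_eq h0 fun _ => iterate_ne_of_lt ha, swap_apply_right]
  refine le_antisymm (IsPeriodicPt.minimalPeriod_le h0 periodic) (not_lt.1 fun hlt => ?_)
  have hmin := iterate_minimalPeriod (f := (swap x (σ^[a] x) * σ : Perm α)) (x := x)
  rw [iterate_swap_mul (fun _ => iterate_ne_of_lt ha) hlt] at hmin
  exact iterate_ne_self (minimalPeriod_pos _ x) (hlt.trans ha) hmin

lemma not_cycleRel_swap_iterate_mul : ¬ cycleRel (swap x (σ^[a] x) * σ) x (σ^[a] x) := by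
  rw [cycleRel_iff_exists_lt, minimalPeriod_swap_iterate_mul h0 ha]
  rintro ⟨i, hi, heq⟩
  rw [iterate_swap_mul (fun _ => iterate_ne_of_lt ha) hi] at heq
  exact hi.ne (injOn_iterate σ x (mem_coe.2 (mem_range.2 (hi.trans ha)))
    (mem_coe.2 (mem_range.2 ha)) heq)

end Cut

lemma not_cycleRel_swap_mul {σ : Perm α} {x y : α} (h : cycleRel σ x y) (hxy : x ≠ y) :
    ¬ cycleRel (swap x y * σ) x y := by
  obtain ⟨a, ha, rfl⟩ := cycleRel_iff_exists_lt.1 h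
  refine not_cycleRel_swap_iterate_mul (Nat.pos_of_ne_zero ?_) ha
  rintro rfl
  exact hxy rfl

end Finite

variable [Fintype α] [DecidableEq α]

lemma block_cycleRel (σ : Perm α) (x : α) :
    block (cycleRel σ) x = (range (minimalPeriod σ x)).image (fun i => σ^[i] x) := by
  ext z
  simp only [mem_block, cycleRel_iff_exists_lt, mem_image, mem_range]

lemma card_block_cycleRel (σ : Perm α) (x : α) : #(block (cycleRel σ) x) = minimalPeriod σ x := by
  rw [block_cycleRel, card_image_of_injOn (injOn_iterate σ x), card_range]

lemma erase_block_cycleRel (σ : Perm α) (x : α) :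
    (block (cycleRel σ) x).erase x = (Ico 1 (minimalPeriod σ x)).image (fun i => σ^[i] x) := by
  rw [block_cycleRel]
  ext z
  simp only [mem_erase, mem_image, mem_range, mem_Ico]
  constructor
  · rintro ⟨hz, i, hi, rfl⟩
    refine ⟨i, ⟨Nat.one_le_iff_ne_zero.2 ?_, hi⟩, rfl⟩
    rintro rfl
    exact hz rfl
  · rintro ⟨i, ⟨h0, hi⟩, rfl⟩
    exact ⟨iterate_ne_self h0 hi, i, hi, rfl⟩

lemma sum_erase_block_cycleRel {M : Type*} [AddCommMonoid M] (σ : Perm α) (x : α) (g : ℕ → M) :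
    ∑ y ∈ (block (cycleRel σ) x).erase x, g #(block (cycleRel (swap x y * σ)) x) =
      ∑ a ∈ Ico 1 #(block (cycleRel σ) x), g a := by
  rw [erase_block_cycleRel, card_block_cycleRel, sum_image]
  · refine sum_congr rfl fun a ha => ?_
    obtain ⟨h0, ha⟩ := mem_Ico.1 ha
    rw [card_block_cycleRel, minimalPeriod_swap_iterate_mul h0 ha]
  · refine (injOn_iterate σ x).mono fun i hi => ?_
    exact mem_coe.2 (mem_range.2 (mem_Ico.1 (mem_coe.1 hi)).2)

end Cycles

section MainFormula

open Finset

variable {α : Type*} [Fintype α] [DecidableEq α]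

open Classical in
/-- The number of factorizations of `σ` into `m` transpositions whose orbit relation is `π`, defined
by splitting off the first factor `swap x y`; each transposition arises from two ordered pairs
`(x, y)`. -/
noncomputable def factorCount : ℕ → Perm α → Setoid α → ℚ
  | 0, σ, π => if σ = 1 ∧ π = ⊥ then 1 else 0
  | m + 1, σ, π => (1 / 2) * ∑ x, ∑ y ∈ univ.erase x, ∑ π' with merge π' x y = π,
      factorCount m (swap x y * σ) π'

lemma card_blocks_cycleRel_swap_mul_of_not {σ : Perm α} {x y : α} (h : ¬ cycleRel σ x y) :
    #(blocks (cycleRel (swap x y * σ))) + 1 = #(blocks (cycleRel σ)) := by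
  rw [cycleRel_swap_mul_eq_merge h, card_blocks_merge h]

lemma card_blocks_cycleRel_swap_mul {σ : Perm α} {x y : α} (h : cycleRel σ x y) (hxy : x ≠ y) :
    #(blocks (cycleRel (swap x y * σ))) = #(blocks (cycleRel σ)) + 1 := by
  have hcard := card_blocks_cycleRel_swap_mul_of_not (not_cycleRel_swap_mul h hxy)
  rw [swap_mul_self_mul] at hcard
  exact hcard.symm

lemma card_add_card_blocks_le_of_swap_mul {m : ℕ} {σ : Perm α} {π : Setoid α} {x y : α}
    (hxy : x ≠ y) (hle : cycleRel (swap x y * σ) ≤ π)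
    (hcard : Fintype.card α + #(blocks (cycleRel (swap x y * σ))) ≤ m + 2 * #(blocks π)) :
    Fintype.card α + #(blocks (cycleRel σ)) ≤ m + 1 + 2 * #(blocks (merge π x y)) := by
  by_cases hπ : π x y
  · rw [merge_eq_self hπ]
    by_cases hσ : cycleRel σ x y
    · have := card_blocks_cycleRel_swap_mul hσ hxy
      omega
    · have := card_blocks_cycleRel_swap_mul_of_not hσ
      omega
  · have hcycles := card_blocks_cycleRel_swap_mul_of_not fun h => hπ (hle h)
    rw [swap_mul_self_mul] at hcycles
    have := card_blocks_merge hπ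
    omega

-- Riemann–Hurwitz: every component of the covering has nonnegative genus.
lemma of_factorCount_ne_zero {m : ℕ} {σ : Perm α} {π : Setoid α} (h : factorCount m σ π ≠ 0) :
    cycleRel σ ≤ π ∧ Fintype.card α + #(blocks (cycleRel σ)) ≤ m + 2 * #(blocks π) := by
  classical
  induction m generalizing σ π with
  | zero =>
    rw [factorCount] at h
    obtain ⟨rfl, rfl⟩ := (ite_ne_right_iff.1 h).1
    rw [cycleRel_one, card_blocks_bot]
    exact ⟨le_rfl, by omega⟩
  | succ m ih =>
    rw [factorCount] at h
    obtain ⟨x, -, hx⟩ := exists_ne_zero_of_sum_ne_zero (right_ne_zero_of_mul h)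
    obtain ⟨y, hy, hxy⟩ := exists_ne_zero_of_sum_ne_zero hx
    obtain ⟨π', hπ', hne⟩ := exists_ne_zero_of_sum_ne_zero hxy
    obtain rfl := (mem_filter_univ _).1 hπ'
    obtain ⟨hle, hcard⟩ := ih hne
    exact ⟨cycleRel_le_merge hle,
      card_add_card_blocks_le_of_swap_mul (mem_erase.1 hy).1.symm hle hcard⟩

open Classical in
/-- The contribution of the factorizations with first factor `swap x y`. -/
noncomputable def swapCount (m : ℕ) (σ : Perm α) (π : Setoid α) (x y : α) : ℚ :=
  ∑ π' with merge π' x y = π, factorCount m (swap x y * σ) π'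

lemma factorCount_succ (m : ℕ) (σ : Perm α) (π : Setoid α) :
    factorCount (m + 1) σ π = (1 / 2) * ∑ x, ∑ y ∈ univ.erase x, swapCount m σ π x y := rfl

lemma swapCount_of_not_rel {m : ℕ} {σ : Perm α} {π : Setoid α} {x y : α} (h : ¬ π x y) :
    swapCount m σ π x y = 0 := by
  classical
  rw [swapCount, filter_false_of_mem, sum_empty]
  rintro π' _ rfl
  exact h (merge_rel π' x y)

lemma swapCount_of_not_cycleRel {m : ℕ} {σ : Perm α} {π : Setoid α} {x y : α}
    (h : ¬ cycleRel σ x y) (hπ : π x y) :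
    swapCount m σ π x y = factorCount m (swap x y * σ) π := by
  classical
  rw [swapCount]
  refine sum_eq_single_of_mem π (mem_filter.2 ⟨mem_univ _, merge_eq_self hπ⟩) ?_
  intro π' hπ' hne
  by_contra hcount
  refine hne ?_
  rw [← (mem_filter.1 hπ').2, merge_eq_self]
  exact (of_factorCount_ne_zero hcount).1 (cycleRel_swap_mul_of_not h)

/-- The product formula for `factorCount` at length `m`, for all permutations `σ` and relations `π`
satisfying the genus-zero condition. -/
def GenusZeroFormula (α : Type*) [Fintype α] [DecidableEq α] (m : ℕ) : Prop :=
  ∀ (σ : Perm α) (π : Setoid α), cycleRel σ ≤ π →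
    Fintype.card α + #(blocks (cycleRel σ)) = m + 2 * #(blocks π) →
    factorCount m σ π = m.factorial * (cycleProd (cycleRel σ) * blockProd (cycleRel σ) π)

section Step

variable {m : ℕ} {σ : Perm α} {π : Setoid α}

open Classical in
lemma swapCount_of_cycleRel {x y : α} (h : cycleRel σ x y) (hxy : x ≠ y)
    (hdim : Fintype.card α + #(blocks (cycleRel σ)) = m + 1 + 2 * #(blocks π))
    (ih : GenusZeroFormula α m) :
    swapCount m σ π x y = m.factorial * cycleProd (cycleRel (swap x y * σ)) *
      ∑ π' with merge π' x y = π ∧ ¬ π' x y ∧ cycleRel (swap x y * σ) ≤ π',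
        blockProd (cycleRel (swap x y * σ)) π' := by
  have hcycles := card_blocks_cycleRel_swap_mul h hxy
  rw [swapCount, mul_sum]
  refine (sum_subset (monotone_filter_right _ fun _ _ h => h.1) ?_).symm.trans
    (sum_congr rfl ?_)
  · intro π' hπ' hnot
    by_contra hcount
    obtain ⟨hle, hcard⟩ := of_factorCount_ne_zero hcount
    obtain rfl := (mem_filter.1 hπ').2
    have rel : π' x y := by
      by_contra hn
      exact hnot (mem_filter.2 ⟨mem_univ _, rfl, hn, hle⟩)
    rw [merge_eq_self rel] at hdim
    omega
  · intro π' hπ'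
    obtain ⟨rfl, hn, hle⟩ := (mem_filter.1 hπ').2
    have := card_blocks_merge hn
    rw [ih _ _ hle (by omega)]
    ring

/-- Up to the common factor of the other blocks and cycles, the contribution of the transpositions
moving a fixed point of the cycle `c` in the block `B`: those joining `c` to another cycle `d`, and
those cutting `c` into cycles of lengths `a` and `#c - a`. -/
noncomputable def cutJoinSum (ρ : Setoid α) (B c : Finset α) : ℚ :=
  ∑ d ∈ (blocksIn ρ B).erase c, (#d : ℚ) *
    (cycleWeight (#c + #d) / (cycleWeight #c * cycleWeight #d) *
      (#B : ℚ) ^ ((#(blocksIn ρ B) : ℤ) - 4)) +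
  ∑ a ∈ Ico 1 #c, cycleWeight a * cycleWeight (#c - a) / cycleWeight #c *
    abelSum (fun d : Finset α => (#d : ℚ)) 2 2 ((blocksIn ρ B).erase c) a ((#c - a : ℕ) : ℚ)

variable (hσ : cycleRel σ ≤ π)
  (hdim : Fintype.card α + #(blocks (cycleRel σ)) = m + 1 + 2 * #(blocks π))
  (ih : GenusZeroFormula α m)
include hσ hdim ih

lemma swapCount_join {x y : α} (hπ : π x y) (h : ¬ cycleRel σ x y) :
    swapCount m σ π x y = m.factorial * cycleProd (cycleRel σ) *
      (∏ B ∈ (blocks π).erase (block π x), blockWeight (cycleRel σ) B) *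
      (cycleWeight (#(block (cycleRel σ) x) + #(block (cycleRel σ) y)) /
        (cycleWeight #(block (cycleRel σ) x) * cycleWeight #(block (cycleRel σ) y)) *
        (#(block π x) : ℚ) ^ ((#(blocksIn (cycleRel σ) (block π x)) : ℤ) - 4)) := by
  have hcard := card_blocks_merge h
  rw [swapCount_of_not_cycleRel h hπ, ih] <;> rw [cycleRel_swap_mul_eq_merge h]
  · rw [cycleProd_merge h, blockProd_merge hσ hπ h]
    ring
  · exact merge_le hσ hπ
  · omega

lemma swapCount_cut {x y : α} (hρ : cycleRel σ x y) (hxy : x ≠ y) :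
    swapCount m σ π x y = m.factorial * cycleProd (cycleRel σ) *
      (∏ B ∈ (blocks π).erase (block π x), blockWeight (cycleRel σ) B) *
      (cycleWeight #(block (cycleRel (swap x y * σ)) x) *
        cycleWeight (#(block (cycleRel σ) x) - #(block (cycleRel (swap x y * σ)) x)) /
          cycleWeight #(block (cycleRel σ) x) *
        abelSum (fun d : Finset α => (#d : ℚ)) 2 2
          ((blocksIn (cycleRel σ) (block π x)).erase (block (cycleRel σ) x))
          #(block (cycleRel (swap x y * σ)) x)
          ((#(block (cycleRel σ) x) - #(block (cycleRel (swap x y * σ)) x) : ℕ) : ℚ)) := by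
  have hn := not_cycleRel_swap_mul hρ hxy
  rw [swapCount_of_cycleRel hρ hxy hdim ih]
  have hmerge : merge (cycleRel (swap x y * σ)) x y = cycleRel σ := by
    rw [merge_cycleRel_swap_mul, merge_eq_self hρ]
  generalize cycleRel (swap x y * σ) = ρ' at hn hmerge ⊢
  generalize cycleRel σ = ρ at hσ hρ hmerge ⊢
  subst hmerge
  have hle : ρ' ≤ π := (le_merge ρ' x y).trans hσ
  have hπ : π x y := hσ hρ
  have hcard : #(block (merge ρ' x y) x) = #(block ρ' x) + #(block ρ' y) := by
    rw [block_merge_left, card_union_block hn]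
  have hsum := sum_separating_blockProd hle hπ hn 0
  simp only [neg_zero, zpow_zero, mul_one, zero_add] at hsum
  rw [hsum, cycleProd_merge hn, freeBlocks_eq_erase_merge hle hπ hn, hcard, Nat.add_sub_cancel_left,
    prod_congr rfl fun B hB => blockWeight_merge_of_mem_erase hπ hB]
  have := (cycleWeight_card_block_pos ρ' x).ne'
  have := (cycleWeight_card_block_pos ρ' y).ne'
  have := (cycleWeight_card_block_pos (merge ρ' x y) x).ne'
  rw [hcard] at this
  field_simp

lemma sum_swapCount (x : α) :
    ∑ y ∈ univ.erase x, swapCount m σ π x y = m.factorial * cycleProd (cycleRel σ) *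
      (∏ B ∈ (blocks π).erase (block π x), blockWeight (cycleRel σ) B) *
        cutJoinSum (cycleRel σ) (block π x) (block (cycleRel σ) x) := by
  have saturated := isSaturated_block hσ x
  have hc := saturated.block_mem_blocksIn (mem_block_self π x)
  have restrict : ∑ y ∈ univ.erase x, swapCount m σ π x y =
      ∑ y ∈ (block π x).erase x, swapCount m σ π x y := by
    refine (sum_subset (erase_subset_erase _ (subset_univ _)) fun y hy hyπ => ?_).symm
    exact swapCount_of_not_rel fun h => hyπ (mem_erase.2 ⟨(mem_erase.1 hy).1, mem_block.2 h⟩)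
  have split_off : ∑ y ∈ (block π x).erase x, swapCount m σ π x y =
      ∑ d ∈ (blocksIn (cycleRel σ) (block π x)).erase (block (cycleRel σ) x),
        ∑ y ∈ d, swapCount m σ π x y +
      ∑ y ∈ (block (cycleRel σ) x).erase x, swapCount m σ π x y := by
    rw [sum_erase_eq_sub (mem_block_self π x), sum_erase_eq_sub (mem_block_self _ x),
      ← saturated.sum_blocksIn, ← add_sum_erase _ _ hc]
    ring
  rw [restrict, split_off, cutJoinSum, mul_add]
  congr 1
  · rw [mul_sum]
    refine sum_congr rfl fun d hd => ?_
    obtain ⟨hdc, hd⟩ := mem_erase.1 hd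
    obtain ⟨hd, hdB⟩ := mem_blocksIn.1 hd
    have const : ∀ y ∈ d, swapCount m σ π x y = _ := fun y hy => by
      have hdy := block_eq_of_mem hd hy
      refine (swapCount_join hσ hdim ih (mem_block.1 (hdB hy)) fun h => hdc ?_).trans (by rw [hdy])
      rw [← hdy, ← block_eq_block.2 h]
    rw [sum_congr rfl const, sum_const, nsmul_eq_mul]
    ring
  · rw [← sum_erase_block_cycleRel σ x (fun a => cycleWeight a *
      cycleWeight (#(block (cycleRel σ) x) - a) / cycleWeight #(block (cycleRel σ) x) *
      abelSum (fun d : Finset α => (#d : ℚ)) 2 2 ((blocksIn (cycleRel σ) (block π x)).erase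
        (block (cycleRel σ) x)) a ((#(block (cycleRel σ) x) - a : ℕ) : ℚ)), mul_sum]
    refine sum_congr rfl fun y hy => ?_
    obtain ⟨hyx, hy⟩ := mem_erase.1 hy
    exact swapCount_cut hσ hdim ih (mem_block.1 hy) hyx.symm

end Step

lemma sum_card_mul_cutJoinSum {ρ π : Setoid α} (h : ρ ≤ π) {B : Finset α} (hB : B ∈ blocks π) :
    ∑ c ∈ blocksIn ρ B, (#c : ℚ) * cutJoinSum ρ B c =
      2 * (#B + #(blocksIn ρ B) - 2) * blockWeight ρ B := by
  rw [blockWeight, ← cut_join_identity (l := card) (C := blocksIn ρ B), ← sum_add_distrib]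
  · refine sum_congr rfl fun c _ => ?_
    rw [cutJoinSum, mul_add, mul_sum]
    simp only [mul_assoc]
  · exact fun c hc => card_pos.2 (nonempty_of_mem_blocks (mem_blocksIn.1 hc).1)
  · exact card_pos.1 (card_blocksIn_pos h hB)
  · exact_mod_cast (isSaturated_of_mem_blocks h hB).sum_card_blocksIn

lemma sum_block_prod_mul_cutJoinSum {ρ π : Setoid α} (h : ρ ≤ π) {B : Finset α}
    (hB : B ∈ blocks π) :
    ∑ x ∈ B, (∏ B' ∈ (blocks π).erase (block π x), blockWeight ρ B') *
        cutJoinSum ρ (block π x) (block ρ x) =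
      2 * blockProd ρ π * (#B + #(blocksIn ρ B) - 2) := by
  rw [blockProd, ← mul_prod_erase _ _ hB, ← (isSaturated_of_mem_blocks h hB).sum_blocksIn]
  have const : ∀ c ∈ blocksIn ρ B, ∑ x ∈ c, (∏ B' ∈ (blocks π).erase (block π x),
      blockWeight ρ B') * cutJoinSum ρ (block π x) (block ρ x) =
        (∏ B' ∈ (blocks π).erase B, blockWeight ρ B') * (#c * cutJoinSum ρ B c) := fun c hc => by
    obtain ⟨hc, hcB⟩ := mem_blocksIn.1 hc
    rw [sum_congr rfl fun x hx => by rw [block_eq_of_mem hB (hcB hx), block_eq_of_mem hc hx],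
      sum_const, nsmul_eq_mul, mul_left_comm]
  rw [sum_congr rfl const, ← mul_sum, sum_card_mul_cutJoinSum h hB]
  ring

lemma sum_blocks_card_add_card_blocksIn {ρ π : Setoid α} (h : ρ ≤ π) :
    ∑ B ∈ blocks π, ((#B : ℚ) + #(blocksIn ρ B) - 2) =
      Fintype.card α + #(blocks ρ) - 2 * #(blocks π) := by
  rw [sum_sub_distrib, sum_add_distrib, sum_const, nsmul_eq_mul, ← sum_card_blocks π,
    ← sum_card_blocksIn_blocks h]
  push_cast
  ring

lemma cycleProd_bot : cycleProd (⊥ : Setoid α) = 1 := by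
  refine prod_eq_one fun c hc => ?_
  rw [card_eq_one_of_mem_blocks_bot hc, cycleWeight_one]

lemma blockProd_bot_bot : blockProd (⊥ : Setoid α) ⊥ = 1 := by
  refine prod_eq_one fun c hc => ?_
  rw [blockWeight, card_eq_one_of_mem_blocks_bot hc, Nat.cast_one, one_zpow]

lemma genusZeroFormula_zero : GenusZeroFormula α 0 := fun σ π hσ hdim => by
  have hπσ := card_blocks_anti hσ
  have hσ_le := card_blocks_anti (bot_le : ⊥ ≤ cycleRel σ)
  rw [card_blocks_bot] at hσ_le
  have hπ : π = ⊥ := eq_bot_of_card_le_card_blocks (by omega)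
  have hσ : cycleRel σ = ⊥ := eq_bot_of_card_le_card_blocks (by omega)
  rw [factorCount, if_pos ⟨eq_one_of_cycleRel_eq_bot hσ, hπ⟩, hσ, hπ, cycleProd_bot,
    blockProd_bot_bot, Nat.factorial_zero, Nat.cast_one, mul_one, mul_one]

theorem genusZeroFormula (m : ℕ) : GenusZeroFormula α m := by
  induction m with
  | zero => exact genusZeroFormula_zero
  | succ m ih =>
    intro σ π hσ hdim
    have hdim' : (Fintype.card α : ℚ) + #(blocks (cycleRel σ)) - 2 * #(blocks π) = m + 1 := by
      rw [sub_eq_iff_eq_add]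
      exact_mod_cast hdim
    calc factorCount (m + 1) σ π
      _ = 1 / 2 * ∑ x, m.factorial * cycleProd (cycleRel σ) *
            ((∏ B ∈ (blocks π).erase (block π x), blockWeight (cycleRel σ) B) *
              cutJoinSum (cycleRel σ) (block π x) (block (cycleRel σ) x)) := by
          rw [factorCount_succ, sum_congr rfl fun x _ => sum_swapCount hσ hdim ih x]
          simp only [mul_assoc]
      _ = m.factorial * cycleProd (cycleRel σ) * blockProd (cycleRel σ) π *
            ∑ B ∈ blocks π, ((#B : ℚ) + #(blocksIn (cycleRel σ) B) - 2) := by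
          rw [← mul_sum, ← sum_blocks π, sum_congr rfl fun B => sum_block_prod_mul_cutJoinSum hσ,
            ← mul_sum]
          ring
      _ = (m + 1).factorial * (cycleProd (cycleRel σ) * blockProd (cycleRel σ) π) := by
          rw [sum_blocks_card_add_card_blocksIn hσ, hdim', Nat.factorial_succ]
          push_cast
          ring

end MainFormula

section Orbits

lemma iSup_cycleRel_cons {α : Type*} {m : ℕ} (τ : Perm α) (t : Fin m → Perm α) :
    ⨆ i, cycleRel ((Fin.cons τ t : Fin (m + 1) → Perm α) i) =
      (⨆ i, cycleRel (t i)) ⊔ cycleRel τ := by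
  refine eq_of_forall_ge_iff fun π => ?_
  simp only [iSup_le_iff, Fin.forall_fin_succ, Fin.cons_zero, Fin.cons_succ, sup_le_iff, and_comm]

variable {α : Type*} [Finite α]

lemma rel_apply_of_mem_closure {S : Set (Perm α)} {π : Setoid α} (h : ∀ τ ∈ S, cycleRel τ ≤ π)
    {g : Perm α} (hg : g ∈ Subgroup.closure S) (x : α) : π x (g x) := by
  induction hg using Subgroup.closure_induction generalizing x with
  | mem τ hτ => exact cycleRel_le_iff.1 (h τ hτ) x
  | one => exact π.refl' x
  | mul a b _ _ ha hb => exact π.trans' (hb x) (ha (b x))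
  | inv a _ ha =>
    have hx := ha (a⁻¹ x)
    rw [← Perm.mul_apply, mul_inv_cancel, Perm.one_apply] at hx
    exact π.symm' hx

lemma orbitRel_closure (S : Set (Perm α)) :
    MulAction.orbitRel (Subgroup.closure S) α = ⨆ τ ∈ S, cycleRel τ := by
  refine le_antisymm ?_ (iSup₂_le fun τ hτ => cycleRel_le_iff.2 fun a => ?_)
  · rintro _ y ⟨⟨g, hg⟩, rfl⟩
    exact Setoid.symm' _ (rel_apply_of_mem_closure (le_iSup₂ (f := fun τ _ => cycleRel τ)) hg y)
  · exact Setoid.symm' _ ⟨⟨τ, Subgroup.subset_closure hτ⟩, rfl⟩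

lemma forall_exists_mem_closure_iff (S : Set (Perm α)) :
    (∀ x y : α, ∃ g ∈ Subgroup.closure S, g x = y) ↔ ⨆ τ ∈ S, cycleRel τ = ⊤ := by
  rw [← orbitRel_closure, Setoid.eq_top_iff, forall_comm]
  simp only [MulAction.orbitRel_apply, MulAction.mem_orbit_iff, Subtype.exists,
    Subgroup.mk_smul, Perm.smul_def, exists_prop]

variable [DecidableEq α]

lemma cycleRel_swap_le_iff {x y : α} {π : Setoid α} : cycleRel (swap x y) ≤ π ↔ π x y := by
  refine ⟨fun h => by simpa only [swap_apply_left] using cycleRel_le_iff.1 h x, fun h => ?_⟩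
  have hle := cycleRel_swap_mul_le (1 : Perm α) x y
  rw [mul_one, cycleRel_one] at hle
  exact hle.trans (merge_le bot_le h)

lemma sup_cycleRel_swap (π : Setoid α) (x y : α) : π ⊔ cycleRel (swap x y) = merge π x y :=
  le_antisymm (sup_le (le_merge π x y) (cycleRel_swap_le_iff.2 (merge_rel π x y)))
    (merge_le le_sup_left (cycleRel_swap_le_iff.1 le_sup_right))

end Orbits

section PermSums

open Finset

variable {α M : Type*} [DecidableEq α]

/-- The permutation `a ↦ b ↦ c ↦ a`, a 3-cycle when `a`, `b`, `c` are distinct. -/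
def threeCycle (a b c : α) : Perm α := swap a b * swap b c

lemma threeCycle_apply_of_notMem {a b c x : α} (hx : x ∉ [a, b, c]) : threeCycle a b c x = x := by
  grind [threeCycle, Perm.mul_apply]

section

variable {a b c : α} (h : [a, b, c].Nodup)
include h

lemma threeCycle_apply_left : threeCycle a b c a = b := by
  grind [threeCycle, Perm.mul_apply]

lemma threeCycle_apply_middle : threeCycle a b c b = c := by
  grind [threeCycle, Perm.mul_apply]

lemma threeCycle_rotate : threeCycle b c a = threeCycle a b c := by
  ext x
  grind [threeCycle, Perm.mul_apply]

end

variable [Fintype α]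

lemma isThreeCycle_threeCycle {a b c : α} (h : [a, b, c].Nodup) :
    (threeCycle a b c).IsThreeCycle := by
  rw [threeCycle, swap_comm]
  exact Perm.isThreeCycle_swap_mul_swap_same (by grind) (by grind) (by grind)

variable [AddCommMonoid M]

lemma nsmul_sum_of_card_support {T : Finset (Perm α)} {k : ℕ} (h : ∀ σ ∈ T, #σ.support = k)
    (G : Perm α → M) : k • ∑ σ ∈ T, G σ = ∑ x, ∑ σ ∈ T with σ x ≠ x, G σ := by
  simp only [sum_filter]
  rw [sum_comm, smul_sum]
  refine sum_congr rfl fun σ hσ => ?_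
  rw [← sum_filter, sum_const, ← h σ hσ, Perm.support]

open Classical in
lemma two_nsmul_sum_isSwap (G : Perm α → M) :
    2 • ∑ τ : Perm α with τ.IsSwap, G τ = ∑ x, ∑ y ∈ univ.erase x, G (swap x y) := by
  rw [nsmul_sum_of_card_support fun τ hτ => Perm.card_support_eq_two.2 ((mem_filter_univ τ).1 hτ)]
  refine sum_congr rfl fun x _ => ?_
  have swap_apply_eq : ∀ τ : Perm α, τ.IsSwap → τ x ≠ x → swap x (τ x) = τ := by
    rintro τ hτ hx
    obtain ⟨a, b, -, rfl⟩ := id hτ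
    exact (hτ.isCycle.eq_swap_of_apply_apply_eq_self hx (swap_apply_self a b x)).symm
  refine sum_bij' (fun τ _ => τ x) (fun y _ => swap x y) ?_ ?_ ?_ ?_ ?_ <;>
    simp only [mem_filter, mem_univ, true_and, mem_erase, and_true, and_imp, ne_eq, swap_apply_left]
  · exact fun τ _ hx => hx
  · exact fun y hy => ⟨⟨x, y, Ne.symm hy, rfl⟩, hy⟩
  · exact swap_apply_eq
  · exact fun _ _ => trivial
  · exact fun τ hτ hx => congrArg G (swap_apply_eq τ hτ hx).symm

open Classical in
lemma three_nsmul_sum_isThreeCycle (G : Perm α → M) :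
    3 • ∑ σ : Perm α with σ.IsThreeCycle, G σ =
      ∑ a, ∑ b, ∑ c, if [a, b, c].Nodup then G (threeCycle a b c) else 0 := by
  rw [nsmul_sum_of_card_support fun σ hσ => ((mem_filter_univ σ).1 hσ).card_support]
  refine sum_congr rfl fun a _ => ?_
  rw [← Fintype.sum_prod_type' fun b c => if [a, b, c].Nodup then G (threeCycle a b c) else 0,
    ← sum_filter]
  have threeCycle_eq : ∀ σ : Perm α, σ.IsThreeCycle → σ a ≠ a →
      threeCycle a (σ a) (σ (σ a)) = σ := fun σ hσ ha =>
    (hσ.eq_swap_mul_swap_iff_mem_support.2 (Perm.mem_support.2 ha)).symm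
  refine sum_bij' (fun σ _ => (σ a, σ (σ a))) (fun p _ => threeCycle a p.1 p.2) ?_ ?_ ?_ ?_ ?_ <;>
    simp only [mem_filter, mem_univ, true_and, and_imp]
  · exact fun σ hσ ha => hσ.nodup_iff_mem_support.2 (Perm.mem_support.2 ha)
  · exact fun p hp => ⟨isThreeCycle_threeCycle hp, by grind [threeCycle_apply_left hp]⟩
  · exact threeCycle_eq
  · exact fun p hp => by rw [threeCycle_apply_left hp, threeCycle_apply_middle hp]
  · exact fun σ hσ ha => congrArg G (threeCycle_eq σ hσ ha).symm

end PermSums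

section Factorizations

open Finset

variable {α : Type*} [Fintype α] [DecidableEq α]

open Classical in
/-- The factorizations of `σ` into `m` transpositions. -/
noncomputable def factorizations (m : ℕ) (σ : Perm α) : Finset (Fin m → Perm α) :=
  {t | (∀ i, (t i).IsSwap) ∧ (List.ofFn t).prod = σ}

lemma mem_factorizations {m : ℕ} {σ : Perm α} {t : Fin m → Perm α} :
    t ∈ factorizations m σ ↔ (∀ i, (t i).IsSwap) ∧ (List.ofFn t).prod = σ := by
  classical exact mem_filter_univ t

lemma cons_mem_factorizations {m : ℕ} {σ τ : Perm α} {t : Fin m → Perm α} :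
    (Fin.cons τ t : Fin (m + 1) → Perm α) ∈ factorizations (m + 1) σ ↔
      τ.IsSwap ∧ t ∈ factorizations m (τ⁻¹ * σ) := by
  simp only [mem_factorizations, Fin.forall_fin_succ, List.ofFn_succ, Fin.cons_zero, Fin.cons_succ,
    List.prod_cons, eq_inv_mul_iff_mul_eq, and_assoc]

open Classical in
lemma card_factorizations_succ (m : ℕ) (σ : Perm α) (π : Setoid α) :
    #{t ∈ factorizations (m + 1) σ | ⨆ i, cycleRel (t i) = π} =
      ∑ τ : Perm α with τ.IsSwap,
        #{t ∈ factorizations m (τ⁻¹ * σ) | (⨆ i, cycleRel (t i)) ⊔ cycleRel τ = π} := by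
  rw [← card_sigma]
  refine card_nbij' (fun t => ⟨t 0, Fin.tail t⟩) (fun p => Fin.cons p.1 p.2) ?_ ?_ ?_ ?_
  · intro t ht
    rw [← Fin.cons_self_tail t, mem_coe, mem_filter, cons_mem_factorizations,
      iSup_cycleRel_cons] at ht
    simpa [and_assoc] using ht
  · intro p hp
    rw [mem_coe, mem_sigma, mem_filter_univ, mem_filter] at hp
    rw [mem_coe, mem_filter, cons_mem_factorizations, iSup_cycleRel_cons]
    exact ⟨⟨hp.1, hp.2.1⟩, hp.2.2⟩
  · exact fun t _ => Fin.cons_self_tail t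
  · exact fun p _ => rfl

open Classical in
lemma sum_card_factorizations (m : ℕ) (σ : Perm α) (P : Setoid α → Prop) :
    ∑ π with P π, (#{t ∈ factorizations m σ | ⨆ i, cycleRel (t i) = π} : ℚ) =
      #{t ∈ factorizations m σ | P (⨆ i, cycleRel (t i))} := by
  rw [← Nat.cast_sum]
  convert! congrArg (Nat.cast : ℕ → ℚ) (sum_card_fiberwise_eq_card_filter (factorizations m σ)
    {π | P π} fun t => ⨆ i, cycleRel (t i)) using 3
  simp only [mem_filter_univ]

open Classical in
theorem factorCount_eq_card (m : ℕ) (σ : Perm α) (π : Setoid α) :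
    factorCount m σ π = #{t ∈ factorizations m σ | ⨆ i, cycleRel (t i) = π} := by
  induction m generalizing σ π with
  | zero =>
    rw [factorCount, factorizations, filter_filter, card_filter, Fintype.sum_unique]
    simp only [IsEmpty.forall_iff, List.ofFn_zero, List.prod_nil, true_and, iSup_of_empty,
      eq_comm (a := σ), eq_comm (a := π)]
    push_cast
    rfl
  | succ m ih =>
    rw [card_factorizations_succ, factorCount]
    simp only [← sup_cycleRel_swap, ih, sum_card_factorizations]
    have hswap := two_nsmul_sum_isSwap fun τ : Perm α =>
      (#{t ∈ factorizations m (τ⁻¹ * σ) | (⨆ i, cycleRel (t i)) ⊔ cycleRel τ = π} : ℚ)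
    simp only [swap_inv] at hswap
    rw [← hswap, nsmul_eq_mul]
    push_cast
    ring

open Classical in
/-- The number of factorizations of `(s₁ * s₂)⁻¹` into `m` transpositions that act transitively
together with `s₁` and `s₂`, that is, of the coverings with given monodromies `s₁`, `s₂` at the two
degenerate branch points. -/
noncomputable def coverCount (m : ℕ) (s₁ s₂ : Perm α) : ℚ :=
  ∑ π with cycleRel s₁ ⊔ cycleRel s₂ ⊔ π = ⊤, factorCount m (s₁ * s₂)⁻¹ π

open Classical in
lemma coverCount_eq_card (m : ℕ) (s₁ s₂ : Perm α) :
    coverCount m s₁ s₂ = #{t : Fin m → Perm α | (∀ i, (t i).IsSwap) ∧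
      s₁ * s₂ * (List.ofFn t).prod = 1 ∧
      ∀ x y, ∃ g ∈ Subgroup.closure ({s₁, s₂} ∪ Set.range t), g x = y} := by
  simp only [coverCount, factorCount_eq_card, sum_card_factorizations]
  congr 2
  ext t
  rw [mem_filter, mem_filter_univ, mem_factorizations, forall_exists_mem_closure_iff,
    _root_.iSup_union, iSup_pair, iSup_range, mul_eq_one_iff_inv_eq,
    eq_comm (a := (s₁ * s₂)⁻¹), and_assoc]

open Classical in
lemma natCard_eq_sum_coverCount (m : ℕ) :
    (Nat.card {p : Perm α × Perm α × (Fin m → Perm α) //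
      p.1.cycleType = {3} ∧ p.2.1.cycleType = {3} ∧ (∀ i, (p.2.2 i).IsSwap) ∧
      p.1 * p.2.1 * (List.ofFn p.2.2).prod = 1 ∧
      ∀ x y : α, ∃ g ∈ Subgroup.closure ({p.1, p.2.1} ∪ Set.range p.2.2), g x = y} : ℚ) =
    ∑ s₁ : Perm α with s₁.IsThreeCycle, ∑ s₂ : Perm α with s₂.IsThreeCycle,
      coverCount m s₁ s₂ := by
  rw [Nat.card_eq_fintype_card, Fintype.card_subtype, card_filter]
  simp only [Fintype.sum_prod_type, coverCount_eq_card, card_filter, sum_filter]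
  simp only [Perm.IsThreeCycle]
  push_cast
  refine sum_congr rfl fun s₁ _ => ?_
  split_ifs with hs₁
  · refine sum_congr rfl fun s₂ _ => ?_
    split_ifs with hs₂
    · simp only [hs₁, hs₂, true_and]
    · simp only [hs₂, false_and, and_false, if_false, sum_const_zero]
  · simp only [hs₁, false_and, if_false, sum_const_zero]

/-- The number of coverings whose degenerate monodromies are the 3-cycles through the ordered
triples `(a, b, c)` and `(x, y, z)`, set to zero unless `x`, `y`, `z` are distinct. -/
noncomputable def tripleCount (m : ℕ) (a b c x y z : α) : ℚ :=
  if [x, y, z].Nodup then coverCount m (threeCycle a b c) (threeCycle x y z) else 0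

theorem nine_mul_natCard (m : ℕ) :
    9 * (Nat.card {p : Perm α × Perm α × (Fin m → Perm α) //
      p.1.cycleType = {3} ∧ p.2.1.cycleType = {3} ∧ (∀ i, (p.2.2 i).IsSwap) ∧
      p.1 * p.2.1 * (List.ofFn p.2.2).prod = 1 ∧
      ∀ x y : α, ∃ g ∈ Subgroup.closure ({p.1, p.2.1} ∪ Set.range p.2.2), g x = y} : ℚ) =
    ∑ a : α, ∑ b, ∑ c, if [a, b, c].Nodup then
      ∑ x, ∑ y, ∑ z, tripleCount m a b c x y z else 0 := by
  classical
  have hfirst := three_nsmul_sum_isThreeCycle fun s₁ : Perm α =>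
    ∑ x, ∑ y, ∑ z, if [x, y, z].Nodup then coverCount m s₁ (threeCycle x y z) else 0
  have hsecond (s₁ : Perm α) := three_nsmul_sum_isThreeCycle fun s₂ : Perm α =>
    coverCount m s₁ s₂
  simp only [tripleCount]
  rw [natCard_eq_sum_coverCount, ← hfirst]
  simp only [← hsecond]
  rw [← smul_sum, smul_smul, nsmul_eq_mul]
  norm_num

end Factorizations

section ThreeCycles

open Finset

variable {α : Type*}

lemma not_cycleRel_of_apply_eq {σ : Perm α} {x y : α} (hx : σ x = x) (hxy : x ≠ y) :
    ¬ cycleRel σ x y :=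
  fun h => hxy (h.eq_of_left hx)

variable [DecidableEq α]

lemma swap_mul_apply_eq {σ : Perm α} {a b c : α} (h : [a, b, c].Nodup) (ha : σ a = a) :
    (swap b c * σ) a = a := by
  grind [Perm.mul_apply]

section Finite

variable [Finite α]

lemma cycleRel_threeCycle_le_iff {a b c : α} (h : [a, b, c].Nodup) {π : Setoid α} :
    cycleRel (threeCycle a b c) ≤ π ↔ π a b ∧ π b c := by
  refine ⟨fun hle => ⟨?_, ?_⟩, fun ⟨hab, hbc⟩ => ?_⟩
  · simpa only [threeCycle_apply_left h] using cycleRel_le_iff.1 hle a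
  · simpa only [threeCycle_apply_middle h] using cycleRel_le_iff.1 hle b
  · have hle := (cycleRel_swap_mul_le (swap b c) a b).trans
      (merge_le (cycleRel_swap_le_iff.2 hbc) hab)
    exact hle

lemma cycleRel_threeCycle_mul {σ : Perm α} {a b c : α} (h : [a, b, c].Nodup) (ha : σ a = a)
    (hb : σ b = b) : cycleRel (threeCycle a b c * σ) = merge (merge (cycleRel σ) b c) a b := by
  rw [threeCycle, mul_assoc, cycleRel_swap_mul_eq_merge, cycleRel_swap_mul_eq_merge]
  · exact not_cycleRel_of_apply_eq hb (by grind)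
  · exact not_cycleRel_of_apply_eq (swap_mul_apply_eq h ha) (by grind)

end Finite

variable [Fintype α]

section FixedPoint

variable {σ : Perm α} {x : α} (hx : σ x = x)
include hx

lemma block_cycleRel_of_apply_eq : block (cycleRel σ) x = {x} := by
  rw [block_cycleRel, Function.minimalPeriod_eq_one_iff_isFixedPt.2 hx, range_one, image_singleton]
  rfl

lemma card_block_cycleRel_swap_mul {y : α} (hxy : x ≠ y) :
    #(block (cycleRel (swap x y * σ)) x) = #(block (cycleRel σ) y) + 1 := by
  have hn := not_cycleRel_of_apply_eq hx hxy
  rw [cycleRel_swap_mul_eq_merge hn, block_merge_left, card_union_block hn,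
    block_cycleRel_of_apply_eq hx, card_singleton, add_comm]

lemma cycleProd_swap_mul {y : α} (hxy : x ≠ y) :
    cycleProd (cycleRel (swap x y * σ)) = cycleProd (cycleRel σ) *
      (cycleWeight (#(block (cycleRel σ) y) + 1) / cycleWeight #(block (cycleRel σ) y)) := by
  have hn := not_cycleRel_of_apply_eq hx hxy
  rw [cycleRel_swap_mul_eq_merge hn, cycleProd_merge hn, block_cycleRel_of_apply_eq hx,
    card_singleton, cycleWeight_one, one_mul, add_comm]

end FixedPoint

section SingleSwap

variable {x y : α} (hxy : x ≠ y)
include hxy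

lemma card_blocks_cycleRel_swap : #(blocks (cycleRel (swap x y))) + 1 = Fintype.card α := by
  have hcard := card_blocks_cycleRel_swap_mul_of_not
    (not_cycleRel_of_apply_eq (Perm.one_apply x) hxy)
  rwa [mul_one, cycleRel_one, card_blocks_bot] at hcard

lemma cycleProd_swap : cycleProd (cycleRel (swap x y)) = cycleWeight 2 := by
  have hprod := cycleProd_swap_mul (Perm.one_apply x) hxy
  rwa [mul_one, cycleRel_one, block_bot, card_singleton, cycleProd_bot, cycleWeight_one, div_one,
    one_mul] at hprod

end SingleSwap

section FixedPair

variable {σ : Perm α} {a b c : α} (h : [a, b, c].Nodup) (ha : σ a = a) (hb : σ b = b)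
include h ha hb

lemma card_blocks_cycleRel_threeCycle_mul :
    #(blocks (cycleRel (threeCycle a b c * σ))) + 2 = #(blocks (cycleRel σ)) := by
  rw [threeCycle, mul_assoc,
    ← card_blocks_cycleRel_swap_mul_of_not (not_cycleRel_of_apply_eq hb (y := c) (by grind)),
    ← card_blocks_cycleRel_swap_mul_of_not
      (not_cycleRel_of_apply_eq (swap_mul_apply_eq h ha) (y := b) (by grind))]

lemma card_block_cycleRel_threeCycle_mul :
    #(block (cycleRel (threeCycle a b c * σ)) a) = #(block (cycleRel σ) c) + 2 := by
  rw [threeCycle, mul_assoc, card_block_cycleRel_swap_mul (swap_mul_apply_eq h ha) (by grind),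
    card_block_cycleRel_swap_mul hb (by grind)]

lemma cycleProd_threeCycle_mul :
    cycleProd (cycleRel (threeCycle a b c * σ)) = cycleProd (cycleRel σ) *
      (cycleWeight (#(block (cycleRel σ) c) + 2) / cycleWeight #(block (cycleRel σ) c)) := by
  rw [threeCycle, mul_assoc, cycleProd_swap_mul (swap_mul_apply_eq h ha) (by grind),
    cycleProd_swap_mul hb (by grind), card_block_cycleRel_swap_mul hb (by grind), mul_assoc,
    mul_comm (_ / _), div_mul_div_cancel₀ (cycleWeight_pos (by omega)).ne']

end FixedPair

section SingleThreeCycle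

variable {a b c : α} (h : [a, b, c].Nodup)
include h

lemma card_blocks_cycleRel_threeCycle :
    #(blocks (cycleRel (threeCycle a b c))) + 2 = Fintype.card α := by
  have hcard := card_blocks_cycleRel_threeCycle_mul (σ := 1) h rfl rfl
  rwa [mul_one, cycleRel_one, card_blocks_bot] at hcard

lemma card_block_cycleRel_threeCycle : #(block (cycleRel (threeCycle a b c)) a) = 3 := by
  have hcard := card_block_cycleRel_threeCycle_mul (σ := 1) h rfl rfl
  rwa [mul_one, cycleRel_one, block_bot, card_singleton] at hcard

lemma cycleProd_threeCycle : cycleProd (cycleRel (threeCycle a b c)) = cycleWeight 3 := by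
  have hprod := cycleProd_threeCycle_mul (σ := 1) h rfl rfl
  rwa [mul_one, cycleRel_one, block_bot, card_singleton, cycleProd_bot, cycleWeight_one, div_one,
    one_mul] at hprod

end SingleThreeCycle

end ThreeCycles

section DisjointSwaps

open Finset

variable {α : Type*} [DecidableEq α] {a b c d : α} (h : [a, b, c, d].Nodup)
include h

section Finite

variable [Finite α]

lemma cycleRel_swap_mul_swap : cycleRel (swap a c * swap b d) = merge (cycleRel (swap b d)) a c :=
  cycleRel_swap_mul_eq_merge (not_cycleRel_of_apply_eq (by grind) (by grind))

lemma cycleRel_swap_mul_swap_le_iff {π : Setoid α} :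
    cycleRel (swap a c * swap b d) ≤ π ↔ π a c ∧ π b d := by
  rw [cycleRel_swap_mul_swap h, merge_le_iff, cycleRel_swap_le_iff, and_comm]

lemma not_cycleRel_swap_mul_swap : ¬ cycleRel (swap a c * swap b d) a b := by
  have hab : ¬ cycleRel (swap b d) a b := not_cycleRel_of_apply_eq (by grind) (by grind)
  have hcb : ¬ cycleRel (swap b d) c b := not_cycleRel_of_apply_eq (by grind) (by grind)
  rw [cycleRel_swap_mul_swap h, merge_apply]
  rintro (hrel | ⟨-, hrel | hrel⟩)
  exacts [hab hrel, hab (Setoid.symm' _ hrel), hcb (Setoid.symm' _ hrel)]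

lemma swap_mul_swap_apply_of_not_cycleRel {z : α} (haz : ¬ cycleRel (swap a c * swap b d) a z)
    (hbz : ¬ cycleRel (swap a c * swap b d) b z) : (swap a c * swap b d) z = z := by
  obtain ⟨hac, hbd⟩ := (cycleRel_swap_mul_swap_le_iff h).1 le_rfl
  have hza : z ≠ a := fun hz => haz (hz ▸ Setoid.refl' _ z)
  have hzb : z ≠ b := fun hz => hbz (hz ▸ Setoid.refl' _ z)
  have hzc : z ≠ c := fun hz => haz (hz ▸ hac)
  have hzd : z ≠ d := fun hz => hbz (hz ▸ hbd)
  rw [Perm.mul_apply, swap_apply_of_ne_of_ne hzb hzd, swap_apply_of_ne_of_ne hza hzc]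

end Finite

variable [Fintype α]

lemma card_block_cycleRel_swap_mul_swap : #(block (cycleRel (swap a c * swap b d)) a) = 2 := by
  rw [card_block_cycleRel_swap_mul (by grind) (by grind), block_cycleRel_of_apply_eq (by grind),
    card_singleton]

lemma card_blocks_cycleRel_swap_mul_swap :
    #(blocks (cycleRel (swap a c * swap b d))) + 2 = Fintype.card α := by
  have hcard := card_blocks_cycleRel_swap_mul_of_not (σ := swap b d) (x := a) (y := c)
    (not_cycleRel_of_apply_eq (by grind) (by grind))
  have := card_blocks_cycleRel_swap (x := b) (y := d) (by grind)
  omega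

lemma cycleProd_swap_mul_swap :
    cycleProd (cycleRel (swap a c * swap b d)) = cycleWeight 2 ^ 2 := by
  rw [cycleProd_swap_mul (by grind) (by grind), block_cycleRel_of_apply_eq (by grind),
    card_singleton, cycleProd_swap (by grind), cycleWeight_one, div_one, sq]

end DisjointSwaps

section JoinedCounts

open Finset

variable {α : Type*} [Fintype α] [DecidableEq α]

lemma blockProd_top [Nonempty α] (ρ : Setoid α) :
    blockProd ρ ⊤ = (Fintype.card α : ℚ) ^ ((#(blocks ρ) : ℤ) - 3) := by
  rw [blockProd, blocks_top, prod_singleton, blockWeight, blocksIn_univ, card_univ]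

lemma coverCount_eq_factorCount_top {m : ℕ} {s₁ s₂ : Perm α}
    (h₁ : cycleRel s₁ ≤ cycleRel (s₁ * s₂)) (h₂ : cycleRel s₂ ≤ cycleRel (s₁ * s₂)) :
    coverCount m s₁ s₂ = factorCount m (s₁ * s₂)⁻¹ ⊤ := by
  classical
  rw [coverCount, sum_eq_single ⊤]
  · intro π hπ hne
    by_contra hcount
    have hle := (of_factorCount_ne_zero hcount).1
    rw [cycleRel_inv] at hle
    rw [mem_filter_univ, sup_eq_right.2 (sup_le (h₁.trans hle) (h₂.trans hle))] at hπ
    exact hne hπ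
  · simp only [mem_filter_univ, sup_top_eq, not_true_eq_false, false_imp_iff]

variable [Nonempty α]

lemma coverCount_of_le {m : ℕ} {s₁ s₂ : Perm α} (h₁ : cycleRel s₁ ≤ cycleRel (s₁ * s₂))
    (h₂ : cycleRel s₂ ≤ cycleRel (s₁ * s₂))
    (hdim : Fintype.card α + #(blocks (cycleRel (s₁ * s₂))) = m + 2) :
    coverCount m s₁ s₂ = m.factorial * (cycleProd (cycleRel (s₁ * s₂)) *
      (Fintype.card α : ℚ) ^ ((#(blocks (cycleRel (s₁ * s₂))) : ℤ) - 3)) := by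
  rw [coverCount_eq_factorCount_top h₁ h₂, genusZeroFormula m _ _ le_top, cycleRel_inv,
    blockProd_top]
  rw [cycleRel_inv, blocks_top, card_singleton, hdim]

lemma coverCount_eq_zero_of_le {m : ℕ} {s₁ s₂ : Perm α} (h₁ : cycleRel s₁ ≤ cycleRel (s₁ * s₂))
    (h₂ : cycleRel s₂ ≤ cycleRel (s₁ * s₂))
    (hdim : m + 2 < Fintype.card α + #(blocks (cycleRel (s₁ * s₂)))) : coverCount m s₁ s₂ = 0 := by
  rw [coverCount_eq_factorCount_top h₁ h₂]
  by_contra hcount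
  have hle := (of_factorCount_ne_zero hcount).2
  rw [cycleRel_inv, blocks_top, card_singleton] at hle
  omega

lemma coverCount_threeCycle {m : ℕ} {σ : Perm α} {a b c : α} (h : [a, b, c].Nodup)
    (ha : σ a = a) (hb : σ b = b) (hdim : Fintype.card α + #(blocks (cycleRel σ)) = m + 4) :
    coverCount m (threeCycle a b c) σ = m.factorial * (cycleProd (cycleRel σ) *
      (cycleWeight (#(block (cycleRel σ) c) + 2) / cycleWeight #(block (cycleRel σ) c)) *
      (Fintype.card α : ℚ) ^ ((#(blocks (cycleRel σ)) : ℤ) - 5)) := by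
  have hrel := cycleRel_threeCycle_mul h ha hb
  have hcard := card_blocks_cycleRel_threeCycle_mul h ha hb
  rw [coverCount_of_le, cycleProd_threeCycle_mul h ha hb]
  · congr 3
    omega
  · rw [hrel, cycleRel_threeCycle_le_iff h]
    exact ⟨merge_rel _ a b, le_merge _ a b (merge_rel _ b c)⟩
  · rw [hrel]
    exact (le_merge _ b c).trans (le_merge _ a b)
  · omega

variable {m : ℕ} (hm : m + 6 = 2 * Fintype.card α)
include hm

lemma coverCount_disjoint {a b c x y z : α} (h : [a, b, c, x, y, z].Nodup) :
    coverCount m (threeCycle a b c) (threeCycle x y z) = m.factorial *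
      (cycleWeight 3 ^ 2 * (Fintype.card α : ℚ) ^ ((Fintype.card α : ℤ) - 7)) := by
  have hxyz : [x, y, z].Nodup := by grind
  have hcard := card_blocks_cycleRel_threeCycle hxyz
  rw [coverCount_threeCycle (by grind) (threeCycle_apply_of_notMem (by grind))
      (threeCycle_apply_of_notMem (by grind)) (by omega), cycleProd_threeCycle hxyz,
    block_cycleRel_of_apply_eq (threeCycle_apply_of_notMem (by grind)), card_singleton,
    cycleWeight_one, div_one, ← sq]
  congr 3
  omega

lemma coverCount_common_point {a b c y z : α} (h : [a, b, c, y, z].Nodup) :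
    coverCount m (threeCycle a b c) (threeCycle c y z) = m.factorial *
      (cycleWeight 5 * (Fintype.card α : ℚ) ^ ((Fintype.card α : ℤ) - 7)) := by
  have hcyz : [c, y, z].Nodup := by grind
  have hcard := card_blocks_cycleRel_threeCycle hcyz
  rw [coverCount_threeCycle (by grind) (threeCycle_apply_of_notMem (by grind))
      (threeCycle_apply_of_notMem (by grind)) (by omega), cycleProd_threeCycle hcyz,
    card_block_cycleRel_threeCycle hcyz, mul_div_cancel₀ _ (cycleWeight_pos (by omega)).ne']
  congr 3
  omega

end JoinedCounts

section SeparatingCounts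

open Finset

variable {α : Type*} [Fintype α] [DecidableEq α]

lemma card_freeBlocks {ρ π : Setoid α} (hρ : ρ ≤ π) {x y : α} (hxy : π x y) (hn : ¬ ρ x y) :
    #(freeBlocks ρ π x y) + 2 = #(blocksIn ρ (block π x)) := by
  have hx : block ρ x ∉ insert (block ρ y) (freeBlocks ρ π x y) := by
    rw [mem_insert, not_or]
    exact ⟨block_ne_block hn, block_left_notMem_freeBlocks⟩
  rw [← insert_insert_freeBlocks hρ hxy hn, card_insert_of_notMem hx,
    card_insert_of_notMem block_right_notMem_freeBlocks]

lemma card_freeBlocks_top {ρ : Setoid α} {x y : α} (hn : ¬ ρ x y) :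
    #(freeBlocks ρ ⊤ x y) + 2 = #(blocks ρ) := by
  rw [card_freeBlocks le_top trivial hn, block_top, blocksIn_univ]

lemma card_eq_one_of_mem_freeBlocks_top {σ : Perm α} {x y : α}
    (hfix : ∀ z, ¬ cycleRel σ x z → ¬ cycleRel σ y z → σ z = z) {c : Finset α}
    (hc : c ∈ freeBlocks (cycleRel σ) ⊤ x y) : #c = 1 := by
  obtain ⟨hcy, hcx, hc⟩ := by simpa only [freeBlocks, mem_erase, mem_blocksIn] using hc
  obtain ⟨z, rfl⟩ := mem_blocks.1 hc.1
  rw [block_cycleRel_of_apply_eq (hfix z (fun h => hcx (block_eq_block.2 h).symm)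
    (fun h => hcy (block_eq_block.2 h).symm)), card_singleton]

variable [Nonempty α]

open Classical in
lemma sum_separating_top {ρ : Setoid α} {x y : α} (hn : ¬ ρ x y) (p : ℤ) :
    ∑ π' with merge π' x y = ⊤ ∧ ¬ π' x y ∧ ρ ≤ π', blockProd ρ π' * (#(block π' x) : ℚ) ^ (-p) =
      abelSum (fun c : Finset α => (#c : ℚ)) (p + 2) 2 (freeBlocks ρ ⊤ x y)
        #(block ρ x) #(block ρ y) := by
  rw [sum_separating_blockProd le_top trivial hn, block_top, blocks_top, erase_singleton,
    prod_empty, one_mul]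

theorem coverCount_of_sup_eq_merge {m : ℕ} {s₁ s₂ σ : Perm α} (hσ : s₁ * s₂ = σ) {x y : α}
    (hsup : ∀ π, cycleRel σ ≤ π → cycleRel s₁ ⊔ cycleRel s₂ ⊔ π = merge π x y)
    (hn : ¬ cycleRel σ x y)
    (hdim : Fintype.card α + #(blocks (cycleRel σ)) = m + 4) :
    coverCount m s₁ s₂ = m.factorial * (cycleProd (cycleRel σ) *
      abelSum (fun c : Finset α => (#c : ℚ)) 2 2 (freeBlocks (cycleRel σ) ⊤ x y)
        #(block (cycleRel σ) x) #(block (cycleRel σ) y)) := by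
  classical
  subst hσ
  have separating := sum_separating_top hn 0
  simp only [neg_zero, zpow_zero, mul_one, zero_add] at separating
  rw [← separating, coverCount, mul_sum, mul_sum]
  symm
  refine sum_subset_zero_on_sdiff ?_ ?_ ?_
  · intro π hπ
    obtain ⟨hmerge, -, hle⟩ := (mem_filter_univ π).1 hπ
    rw [mem_filter_univ, hsup π hle, hmerge]
  · intro π hπ
    rw [mem_sdiff, mem_filter_univ, mem_filter_univ] at hπ
    by_contra hcount
    obtain ⟨hle, hcard⟩ := of_factorCount_ne_zero hcount
    rw [cycleRel_inv] at hle hcard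
    rw [hsup π hle] at hπ
    have hxy : π x y := not_not.1 fun hxy => hπ.2 ⟨hπ.1, hxy, hle⟩
    rw [merge_eq_self hxy] at hπ
    rw [hπ.1, blocks_top, card_singleton] at hcard
    omega
  · intro π hπ
    obtain ⟨hmerge, hxy, hle⟩ := (mem_filter_univ π).1 hπ
    have hcard := card_blocks_merge hxy
    rw [hmerge, blocks_top, card_singleton] at hcard
    rw [genusZeroFormula m _ _ ((cycleRel_inv _).trans_le hle), cycleRel_inv]
    rw [cycleRel_inv]
    omega

theorem coverCount_of_card_block_add_eq_four {m : ℕ} (hm : m + 6 = 2 * Fintype.card α)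
    {s₁ s₂ σ : Perm α}
    (hσ : s₁ * s₂ = σ) {x y : α}
    (hsup : ∀ π, cycleRel σ ≤ π → cycleRel s₁ ⊔ cycleRel s₂ ⊔ π = merge π x y)
    (hn : ¬ cycleRel σ x y)
    (hfix : ∀ z, ¬ cycleRel σ x z → ¬ cycleRel σ y z → σ z = z)
    (hblocks : #(blocks (cycleRel σ)) + 2 = Fintype.card α) {k l : ℕ}
    (hk : #(block (cycleRel σ) x) = k) (hl : #(block (cycleRel σ) y) = l)
    (hkl : k + l = 4) :
    coverCount m s₁ s₂ = m.factorial * (cycleProd (cycleRel σ) *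
      (Fintype.card α : ℚ) ^ ((Fintype.card α : ℤ) - 7) *
      (16 / (k * l) ^ 2 * Fintype.card α -
        30 / (k * l * (k + 1) * (l + 1)) * (Fintype.card α - 4))) := by
  have hC := card_freeBlocks_top hn
  have hcard : (Fintype.card α : ℚ) = 4 + #(freeBlocks (cycleRel σ) ⊤ x y) := by
    norm_cast
    omega
  have hkl' : (k + l : ℚ) = 4 := by exact_mod_cast hkl
  have hpos : (Fintype.card α : ℚ) ≠ 0 := by positivity
  rw [coverCount_of_sup_eq_merge hσ hsup hn (by omega), hk, hl, abelSum_two_two_of_eq_one, hkl',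
    ← hcard]
  · have hfree : (#(freeBlocks (cycleRel σ) ⊤ x y) : ℤ) = Fintype.card α - 4 := by omega
    rw [hfree, show (Fintype.card α : ℤ) - 4 - 2 = (Fintype.card α : ℤ) - 7 + 1 by ring,
      show (Fintype.card α : ℤ) - 4 - 3 = (Fintype.card α : ℤ) - 7 by ring, zpow_add_one₀ hpos,
      eq_sub_of_add_eq' hcard.symm]
    ring
  · intro c hc
    rw [card_eq_one_of_mem_freeBlocks_top hfix hc, Nat.cast_one]
  · exact_mod_cast hk ▸ card_block_pos _ x
  · exact_mod_cast hl ▸ card_block_pos _ y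

variable {m : ℕ} (hm : m + 6 = 2 * Fintype.card α)
include hm

lemma coverCount_common_arrow {a b c d : α} (h : [a, b, c, d].Nodup) :
    coverCount m (threeCycle a b c) (threeCycle a b d) = m.factorial * (cycleWeight 2 ^ 2 *
      (Fintype.card α : ℚ) ^ ((Fintype.card α : ℤ) - 7) * ((Fintype.card α + 20) / 6)) := by
  have hprod : threeCycle a b c * threeCycle a b d = swap a c * swap b d := by
    ext
    grind [threeCycle, Perm.mul_apply]
  have hcomm : swap a c * swap b d = swap b d * swap a c := by
    ext
    grind [Perm.mul_apply]
  rw [coverCount_of_card_block_add_eq_four hm hprod (x := a) (y := b) (k := 2) (l := 2)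
    (hkl := rfl)]
  · rw [cycleProd_swap_mul_swap h]
    ring
  · intro π hπ
    rw [cycleRel_swap_mul_swap_le_iff h] at hπ
    refine eq_of_forall_ge_iff fun τ => ?_
    rw [sup_le_iff, sup_le_iff, cycleRel_threeCycle_le_iff (by grind),
      cycleRel_threeCycle_le_iff (by grind), merge_le_iff]
    exact ⟨fun h => ⟨h.2, h.1.1.1⟩, fun ⟨hle, hab⟩ =>
      ⟨⟨⟨hab, τ.trans' (τ.symm' hab) (hle hπ.1)⟩, hab, hle hπ.2⟩, hle⟩⟩
  · exact not_cycleRel_swap_mul_swap h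
  · exact fun z => swap_mul_swap_apply_of_not_cycleRel h
  · exact card_blocks_cycleRel_swap_mul_swap h
  · exact card_block_cycleRel_swap_mul_swap h
  · rw [hcomm, card_block_cycleRel_swap_mul_swap (by grind)]

lemma coverCount_opposite_arrow {a b c d : α} (h : [a, b, c, d].Nodup) :
    coverCount m (threeCycle a b c) (threeCycle c b d) = m.factorial * (cycleWeight 3 *
      (Fintype.card α : ℚ) ^ ((Fintype.card α : ℤ) - 7) *
        ((19 * Fintype.card α + 180) / 36)) := by
  have habd : [a, b, d].Nodup := by grind
  have hprod : threeCycle a b c * threeCycle c b d = threeCycle a b d := by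
    ext
    grind [threeCycle, Perm.mul_apply]
  have hc : threeCycle a b d c = c := threeCycle_apply_of_notMem (by grind)
  have hrel := (cycleRel_threeCycle_le_iff habd).1 le_rfl
  rw [coverCount_of_card_block_add_eq_four hm hprod (x := b) (y := c) (k := 3) (l := 1)
    (hkl := rfl)]
  · rw [cycleProd_threeCycle habd]
    ring
  · intro π hπ
    rw [cycleRel_threeCycle_le_iff habd] at hπ
    refine eq_of_forall_ge_iff fun τ => ?_
    rw [sup_le_iff, sup_le_iff, cycleRel_threeCycle_le_iff (by grind),
      cycleRel_threeCycle_le_iff (by grind), merge_le_iff]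
    exact ⟨fun h => ⟨h.2, h.1.1.2⟩, fun ⟨hle, hbc⟩ =>
      ⟨⟨⟨hle hπ.1, hbc⟩, τ.symm' hbc, hle hπ.2⟩, hle⟩⟩
  · exact fun hbc => not_cycleRel_of_apply_eq hc (by grind) (Setoid.symm' _ hbc)
  · intro z hbz _
    refine threeCycle_apply_of_notMem fun hz => hbz ?_
    rcases by simpa only [List.mem_cons, List.not_mem_nil, or_false] using hz with rfl | rfl | rfl
    exacts [Setoid.symm' _ hrel.1, Setoid.refl' _ _, hrel.2]
  · exact card_blocks_cycleRel_threeCycle habd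
  · rw [← threeCycle_rotate habd, card_block_cycleRel_threeCycle (by grind)]
  · rw [block_cycleRel_of_apply_eq hc, card_singleton]

lemma coverCount_self {a b c : α} (h : [a, b, c].Nodup) :
    coverCount m (threeCycle a b c) (threeCycle a b c) = 0 := by
  have hprod : threeCycle a b c * threeCycle a b c = threeCycle c b a := by
    ext
    grind [threeCycle, Perm.mul_apply]
  have hcba : [c, b, a].Nodup := by grind
  have hcard := card_blocks_cycleRel_threeCycle hcba
  have hle : cycleRel (threeCycle a b c) ≤ cycleRel (threeCycle a b c * threeCycle a b c) := by
    rw [hprod, cycleRel_threeCycle_le_iff h]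
    have := (cycleRel_threeCycle_le_iff hcba).1 le_rfl
    exact ⟨Setoid.symm' _ this.2, Setoid.symm' _ this.1⟩
  refine coverCount_eq_zero_of_le hle hle ?_
  rw [hprod]
  omega

end SeparatingCounts

section OppositeThreeCycles

open Finset

lemma cycleRel_swap {α : Type*} [DecidableEq α] [Finite α] (x y : α) :
    cycleRel (swap x y) = merge ⊥ x y := by
  rw [← sup_cycleRel_swap, bot_sup_eq]

lemma sup_cycleRel_threeCycle_inverse {α : Type*} [DecidableEq α] [Finite α] {a b c : α}
    (h : [a, b, c].Nodup) (π : Setoid α) :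
    cycleRel (threeCycle a b c) ⊔ cycleRel (threeCycle c b a) ⊔ π = merge (merge π a b) b c := by
  refine eq_of_forall_ge_iff fun τ => ?_
  rw [sup_le_iff, sup_le_iff, cycleRel_threeCycle_le_iff h, cycleRel_threeCycle_le_iff (by grind),
    merge_le_iff, merge_le_iff]
  exact ⟨fun hle => ⟨⟨hle.2, hle.1.1.1⟩, hle.1.1.2⟩,
    fun ⟨⟨hle, hab⟩, hbc⟩ => ⟨⟨⟨hab, hbc⟩, τ.symm' hbc, τ.symm' hab⟩, hle⟩⟩

variable {α : Type*} [Fintype α] [DecidableEq α]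

lemma card_blocksIn_bot (π : Setoid α) (x : α) : #(blocksIn ⊥ (block π x)) = #(block π x) := by
  rw [← (isSaturated_block bot_le x).sum_card_blocksIn, card_eq_sum_ones]
  exact sum_congr rfl fun c hc => (card_eq_one_of_mem_blocks_bot (blocksIn_subset _ _ hc)).symm

open Classical in
lemma sum_blockProd_bot_of_merge_eq {π : Setoid α} {x y : α} (hne : x ≠ y) (hxy : π x y) :
    ∑ π' with merge π' x y = π ∧ ¬ π' x y, blockProd ⊥ π' =
      blockProd (merge ⊥ x y) π * (1 + 6 / #(block π x)) := by
  have hn : ¬ (⊥ : Setoid α) x y := hne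
  have separating := sum_separating_blockProd bot_le hxy hn 0
  simp only [bot_le, and_true, neg_zero, zpow_zero, mul_one, zero_add] at separating
  have hC := card_freeBlocks bot_le hxy hn
  rw [card_blocksIn_bot] at hC
  have hpos : (#(block π x) : ℚ) ≠ 0 := by exact_mod_cast (card_block_pos π x).ne'
  rw [separating, blockProd_merge bot_le hxy hn, mul_assoc, card_blocksIn_bot, block_bot, block_bot,
    card_singleton, card_singleton, abelSum_two_two_of_eq_one (fun c hc => by
      rw [card_eq_one_of_mem_blocks_bot (freeBlocks_subset hc), Nat.cast_one])
      (by norm_num) (by norm_num)]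
  congr 1
  have hfree : (#(freeBlocks ⊥ π x y) : ℚ) = #(block π x) - 2 :=
    eq_sub_of_add_eq (by exact_mod_cast hC)
  have hbase : (1 : ℚ) + 1 + #(freeBlocks ⊥ π x y) = #(block π x) := by rw [hfree]; ring
  rw [Nat.cast_one, hbase, hfree,
    show (#(freeBlocks ⊥ π x y) : ℤ) - 2 = #(block π x) - 4 by omega,
    show (#(freeBlocks ⊥ π x y) : ℤ) - 3 = #(block π x) - 4 - 1 by omega, zpow_sub_one₀ hpos]
  field_simp
  ring

variable [Nonempty α]

section

variable {a b c : α} (h : [a, b, c].Nodup)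
include h

open Classical in
lemma sum_separating_swap :
    ∑ π with merge π b c = ⊤ ∧ ¬ π b c ∧ cycleRel (swap a b) ≤ π,
        blockProd (cycleRel (swap a b)) π * (1 + 6 / #(block π b)) =
      3 / 4 * ((Fintype.card α : ℚ) ^ 2 + 13 * Fintype.card α + 60) *
        (Fintype.card α : ℚ) ^ ((Fintype.card α : ℤ) - 7) := by
  have hc : swap a b c = c := by grind
  have hn : ¬ cycleRel (swap a b) b c := fun hbc =>
    not_cycleRel_of_apply_eq hc (by grind) (Setoid.symm' _ hbc)
  have hone : ∀ B ∈ freeBlocks (cycleRel (swap a b)) ⊤ b c, (#B : ℚ) = 1 := by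
    intro B hB
    rw [card_eq_one_of_mem_freeBlocks_top (fun z hbz _ => ?_) hB, Nat.cast_one]
    refine swap_apply_of_ne_of_ne (fun hz => hbz ?_) (fun hz => hbz ?_)
    · exact hz ▸ Setoid.symm' _ (cycleRel_swap_le_iff.1 le_rfl)
    · exact hz ▸ Setoid.refl' _ z
  have hcard : #(freeBlocks (cycleRel (swap a b)) ⊤ b c) + 3 = Fintype.card α := by
    have := card_freeBlocks_top hn
    have := card_blocks_cycleRel_swap (x := a) (y := b) (by grind)
    omega
  have hb : #(block (cycleRel (swap a b)) b) = 2 := by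
    have := card_block_cycleRel_swap_mul (Perm.one_apply b) (y := a) (by grind)
    rwa [mul_one, cycleRel_one, block_bot, card_singleton, swap_comm] at this
  have value := abelSum_two_two_add_six_mul_abelSum_three_two hone
  rw [show (#(freeBlocks (cycleRel (swap a b)) ⊤ b c) : ℚ) + 3 = Fintype.card α by
      exact_mod_cast hcard,
    show (#(freeBlocks (cycleRel (swap a b)) ⊤ b c) : ℤ) - 4 = Fintype.card α - 7 by omega] at value
  have separating₀ : _ = abelSum _ 2 2 _ _ _ := sum_separating_top hn 0
  have separating₁ : _ = abelSum _ 3 2 _ _ _ := sum_separating_top hn 1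
  rw [hb, block_cycleRel_of_apply_eq hc, card_singleton, Nat.cast_one] at separating₀ separating₁
  rw [← value]
  simp only [neg_zero, zpow_zero, mul_one, zpow_neg_one] at separating₀ separating₁
  simp only [mul_add, mul_one, sum_add_distrib, div_eq_mul_inv, mul_left_comm _ (6 : ℚ), ← mul_sum]
  rw [separating₀, separating₁, Nat.cast_ofNat]

variable {m : ℕ} (hm : m + 6 = 2 * Fintype.card α)
include hm

open Classical in
lemma coverCount_inverse_eq_sum :
    coverCount m (threeCycle a b c) (threeCycle c b a) = m.factorial *
      ∑ π with merge (merge π a b) b c = ⊤ ∧ ¬ merge π a b b c ∧ ¬ π a b, blockProd ⊥ π := by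
  have hprod : threeCycle a b c * threeCycle c b a = 1 := by
    rw [threeCycle, threeCycle, swap_comm c b, swap_comm b a, mul_assoc, swap_mul_self_mul,
      swap_mul_self]
  rw [coverCount, hprod, inv_one, mul_sum]
  refine (sum_subset_zero_on_sdiff (fun π hπ => ?_) (fun π hπ => ?_) (fun π hπ => ?_)).symm
  · rw [mem_filter_univ, sup_cycleRel_threeCycle_inverse h, ((mem_filter_univ π).1 hπ).1]
  · rw [mem_sdiff, mem_filter_univ, mem_filter_univ, sup_cycleRel_threeCycle_inverse h] at hπ
    obtain ⟨htop, hnot⟩ := hπ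
    have hcard : #(blocks (merge (merge π a b) b c)) = 1 := by
      rw [htop, blocks_top, card_singleton]
    by_contra hcount
    have hle := (of_factorCount_ne_zero hcount).2
    rw [cycleRel_one, card_blocks_bot] at hle
    have := card_blocks_le_card_blocks_merge_add_one π a b
    have := card_blocks_le_card_blocks_merge_add_one (merge π a b) b c
    refine hnot ⟨htop, fun hbc => ?_, fun hab => ?_⟩
    · rw [merge_eq_self hbc] at hcard
      omega
    · rw [merge_eq_self hab] at *
      omega
  · obtain ⟨htop, hbc, hab⟩ := (mem_filter_univ π).1 hπ
    have hcard := card_blocks_merge hab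
    have hcard' := card_blocks_merge hbc
    rw [htop, blocks_top, card_singleton] at hcard'
    rw [genusZeroFormula m _ _ (cycleRel_one.trans_le bot_le), cycleRel_one, cycleProd_bot, one_mul]
    rw [cycleRel_one, card_blocks_bot]
    omega

lemma coverCount_inverse :
    coverCount m (threeCycle a b c) (threeCycle c b a) = m.factorial * (
      3 / 4 * ((Fintype.card α : ℚ) ^ 2 + 13 * Fintype.card α + 60) *
        (Fintype.card α : ℚ) ^ ((Fintype.card α : ℤ) - 7)) := by
  classical
  rw [coverCount_inverse_eq_sum h hm, ← sum_separating_swap h,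
    ← sum_fiberwise_of_maps_to (g := fun π => merge π a b)
      (t := {π | merge π b c = ⊤ ∧ ¬ π b c ∧ cycleRel (swap a b) ≤ π})]
  · congr 1
    refine sum_congr rfl fun π hπ => ?_
    obtain ⟨htop, hbc, hle⟩ := (mem_filter_univ π).1 hπ
    have hab := cycleRel_swap_le_iff.1 hle
    rw [cycleRel_swap, block_eq_block.2 (π.symm' hab), ← sum_blockProd_bot_of_merge_eq _ hab,
      filter_filter]
    · refine sum_congr (filter_congr fun π' _ => ?_) fun _ _ => rfl
      constructor
      · exact fun hπ' => ⟨hπ'.2, hπ'.1.2.2⟩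
      · rintro ⟨rfl, hab'⟩
        exact ⟨⟨htop, hbc, hab'⟩, rfl⟩
    · grind
  · intro π hπ
    obtain ⟨htop, hbc, -⟩ := (mem_filter_univ π).1 hπ
    exact (mem_filter_univ _).2 ⟨htop, hbc, cycleRel_swap_le_iff.2 (merge_rel π a b)⟩

end

end OppositeThreeCycles

section TripleSums

open Finset

variable {α : Type*} [DecidableEq α]

lemma sum_ite_ne (s : Finset α) (v : ℚ) :
    ∑ y ∈ s, ∑ z ∈ s, (if y ≠ z then v else 0) = #s * (#s - 1) * v := by
  have inner : ∀ y ∈ s, ∑ z ∈ s, (if y ≠ z then v else 0) = (#s - 1) * v := fun y hy => by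
    rw [← add_sum_erase _ _ hy, if_neg (not_not.2 rfl), zero_add, sum_congr rfl fun z hz =>
      if_pos (ne_of_mem_erase hz).symm, sum_const, nsmul_eq_mul, cast_card_erase_of_mem hy]
  rw [sum_congr rfl inner, sum_const, nsmul_eq_mul, mul_assoc]

lemma sum_ite_nodup (s : Finset α) (v : ℚ) :
    ∑ x ∈ s, ∑ y ∈ s, ∑ z ∈ s, (if [x, y, z].Nodup then v else 0) =
      #s * (#s - 1) * (#s - 2) * v := by
  have inner : ∀ x ∈ s, ∑ y ∈ s, ∑ z ∈ s, (if [x, y, z].Nodup then v else 0) =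
      (#s - 1) * (#s - 2) * v := fun x hx => by
    have restrict : ∑ y ∈ s, ∑ z ∈ s, (if [x, y, z].Nodup then v else 0) =
        ∑ y ∈ s.erase x, ∑ z ∈ s.erase x, if y ≠ z then v else 0 := by
      refine (sum_subset_zero_on_sdiff (erase_subset x s) (fun y hy => ?_) fun y hy => ?_).symm
      · exact sum_eq_zero fun z _ => by grind
      · exact sum_subset_zero_on_sdiff (erase_subset x s) (by grind) (by grind)
    rw [restrict, sum_ite_ne, cast_card_erase_of_mem hx]
    ring
  rw [sum_congr rfl inner, sum_const, nsmul_eq_mul, mul_assoc, mul_assoc, mul_assoc]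

lemma sum_of_nodup {M : Type*} [AddCommMonoid M] {a b c : α} (h : [a, b, c].Nodup) (f : α → M) :
    ∑ x ∈ ({a, b, c} : Finset α), f x = f a + f b + f c := by
  rw [sum_insert (by grind), sum_insert (by grind), sum_singleton, add_assoc]

lemma cast_card_compl_of_nodup [Fintype α] {a b c : α} (h : [a, b, c].Nodup) :
    (#({a, b, c}ᶜ : Finset α) : ℚ) = Fintype.card α - 3 := by
  have hcard : #({a, b, c} : Finset α) = 3 :=
    card_eq_three.2 ⟨a, b, c, by grind, by grind, by grind, rfl⟩
  rw [card_compl, Nat.cast_sub (card_le_univ _), hcard, Nat.cast_ofNat]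

theorem sum_eq_of_cyclic [Fintype α] {F : α → α → α → ℚ} (hF : ∀ x y z, F y z x = F x y z)
    (T : Finset α) :
    ∑ x, ∑ y, ∑ z, F x y z = ∑ x ∈ Tᶜ, ∑ y ∈ Tᶜ, ∑ z ∈ Tᶜ, F x y z +
      3 * ∑ x ∈ T, ∑ y ∈ Tᶜ, ∑ z ∈ Tᶜ, F x y z + 3 * ∑ x ∈ T, ∑ y ∈ T, ∑ z ∈ Tᶜ, F x y z +
      ∑ x ∈ T, ∑ y ∈ T, ∑ z ∈ T, F x y z := by
  have rotate (A B C : Finset α) :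
      ∑ x ∈ B, ∑ y ∈ C, ∑ z ∈ A, F x y z = ∑ x ∈ A, ∑ y ∈ B, ∑ z ∈ C, F x y z := by
    rw [sum_congr rfl fun x _ => sum_comm, sum_comm]
    exact sum_congr rfl fun z _ => sum_congr rfl fun x _ => sum_congr rfl fun y _ => hF z x y
  simp only [← sum_add_sum_compl T, sum_add_distrib]
  rw [rotate Tᶜ Tᶜ T, rotate T Tᶜ Tᶜ, rotate T Tᶜ T, rotate T T Tᶜ]
  ring

end TripleSums

section TripleCounts

open Finset

variable {α : Type*} [Fintype α] [DecidableEq α]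

lemma tripleCount_of_nodup {m : ℕ} {a b c x y z : α} (h : [x, y, z].Nodup) :
    tripleCount m a b c x y z = coverCount m (threeCycle a b c) (threeCycle x y z) := if_pos h

lemma tripleCount_of_not_nodup {m : ℕ} {a b c x y z : α} (h : ¬ [x, y, z].Nodup) :
    tripleCount m a b c x y z = 0 := if_neg h

lemma tripleCount_rotate (m : ℕ) (a b c x y z : α) :
    tripleCount m a b c y z x = tripleCount m a b c x y z := by
  by_cases h : [x, y, z].Nodup
  · rw [tripleCount_of_nodup h, tripleCount_of_nodup (by grind), threeCycle_rotate h]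
  · rw [tripleCount_of_not_nodup h, tripleCount_of_not_nodup (by grind)]

variable {m : ℕ} {a b c : α} (h : [a, b, c].Nodup)
include h

lemma tripleCount_rotate_left (x y z : α) :
    tripleCount m b c a x y z = tripleCount m a b c x y z := by
  rw [tripleCount, threeCycle_rotate h, tripleCount]

variable [Nonempty α] (hm : m + 6 = 2 * Fintype.card α)
include hm

lemma sum_tripleCount_disjoint :
    ∑ x ∈ ({a, b, c}ᶜ : Finset α), ∑ y ∈ ({a, b, c}ᶜ : Finset α), ∑ z ∈ ({a, b, c}ᶜ : Finset α),
        tripleCount m a b c x y z =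
      ((Fintype.card α : ℚ) - 3) * (Fintype.card α - 4) * (Fintype.card α - 5) * (m.factorial *
        (cycleWeight 3 ^ 2 * (Fintype.card α : ℚ) ^ ((Fintype.card α : ℤ) - 7))) := by
  have value {x y z : α} (hx : x ∉ ({a, b, c} : Finset α)) (hy : y ∉ ({a, b, c} : Finset α))
      (hz : z ∉ ({a, b, c} : Finset α)) : tripleCount m a b c x y z =
        if [x, y, z].Nodup then m.factorial * (cycleWeight 3 ^ 2 *
          (Fintype.card α : ℚ) ^ ((Fintype.card α : ℤ) - 7)) else 0 :=
    ite_congr rfl (fun hxyz => coverCount_disjoint hm (by grind)) fun _ => rfl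
  rw [sum_congr rfl fun x hx => sum_congr rfl fun y hy => sum_congr rfl fun z hz =>
    value (mem_compl.1 hx) (mem_compl.1 hy) (mem_compl.1 hz),
    sum_ite_nodup, cast_card_compl_of_nodup h]
  ring

lemma tripleCount_of_mem {x y z : α} (hx : x ∈ ({a, b, c} : Finset α))
    (hy : y ∉ ({a, b, c} : Finset α)) (hz : z ∉ ({a, b, c} : Finset α)) :
    tripleCount m a b c x y z = if y ≠ z then m.factorial *
      (cycleWeight 5 * (Fintype.card α : ℚ) ^ ((Fintype.card α : ℤ) - 7)) else 0 := by
  split_ifs with hyz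
  · rw [tripleCount_of_nodup (by grind)]
    obtain rfl | rfl | rfl : x = a ∨ x = b ∨ x = c := by simpa using hx
    · rw [← threeCycle_rotate h, coverCount_common_point hm (by grind)]
    · rw [threeCycle_rotate (by grind), coverCount_common_point hm (by grind)]
    · rw [coverCount_common_point hm (by grind)]
  · exact tripleCount_of_not_nodup (by grind)

lemma sum_tripleCount_common_point :
    ∑ x ∈ ({a, b, c} : Finset α), ∑ y ∈ ({a, b, c}ᶜ : Finset α), ∑ z ∈ ({a, b, c}ᶜ : Finset α),
        tripleCount m a b c x y z =
      3 * ((Fintype.card α : ℚ) - 3) * (Fintype.card α - 4) * (m.factorial *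
        (cycleWeight 5 * (Fintype.card α : ℚ) ^ ((Fintype.card α : ℤ) - 7))) := by
  rw [sum_congr rfl fun x hx => sum_congr rfl fun y hy => sum_congr rfl fun z hz =>
    tripleCount_of_mem h hm hx (mem_compl.1 hy) (mem_compl.1 hz)]
  rw [sum_of_nodup h, sum_ite_ne, cast_card_compl_of_nodup h]
  ring

lemma sum_tripleCount_common_pair_of_notMem {z : α} (hz : z ∉ ({a, b, c} : Finset α)) :
    ∑ x ∈ ({a, b, c} : Finset α), ∑ y ∈ ({a, b, c} : Finset α), tripleCount m a b c x y z =
      3 * (m.factorial *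
        ((cycleWeight 2 ^ 2 * ((Fintype.card α + 20) / 6) +
          cycleWeight 3 * ((19 * Fintype.card α + 180) / 36)) *
          (Fintype.card α : ℚ) ^ ((Fintype.card α : ℤ) - 7))) := by
  have hrot : [b, c, a].Nodup := by grind
  have common {a b c : α} (habc : [a, b, c].Nodup) (hz : z ∉ ({a, b, c} : Finset α)) :
      tripleCount m a b c a b z = m.factorial * (cycleWeight 2 ^ 2 *
        (Fintype.card α : ℚ) ^ ((Fintype.card α : ℤ) - 7) * ((Fintype.card α + 20) / 6)) := by
    rw [tripleCount_of_nodup (by grind), coverCount_common_arrow hm (by grind)]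
  have opposite {a b c : α} (habc : [a, b, c].Nodup) (hz : z ∉ ({a, b, c} : Finset α)) :
      tripleCount m a b c c b z = m.factorial * (cycleWeight 3 *
        (Fintype.card α : ℚ) ^ ((Fintype.card α : ℤ) - 7) *
          ((19 * Fintype.card α + 180) / 36)) := by
    rw [tripleCount_of_nodup (by grind), coverCount_opposite_arrow hm (by grind)]
  have diagonal (x : α) : tripleCount m a b c x x z = 0 := tripleCount_of_not_nodup (by grind)
  have hbc := common hrot (by grind)
  have hac := opposite hrot (by grind)
  have hca := common (a := c) (b := a) (c := b) (by grind) (by grind)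
  have hba := opposite (a := c) (b := a) (c := b) (by grind) (by grind)
  rw [tripleCount_rotate_left h] at hbc hac
  rw [tripleCount_rotate_left hrot, tripleCount_rotate_left h] at hca hba
  simp only [sum_of_nodup h, diagonal]
  rw [common h hz, opposite h hz, hbc, hac, hca, hba]
  ring

lemma sum_tripleCount_common_pair :
    ∑ x ∈ ({a, b, c} : Finset α), ∑ y ∈ ({a, b, c} : Finset α), ∑ z ∈ ({a, b, c}ᶜ : Finset α),
        tripleCount m a b c x y z =
      3 * ((Fintype.card α : ℚ) - 3) * (m.factorial *
        ((cycleWeight 2 ^ 2 * ((Fintype.card α + 20) / 6) +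
          cycleWeight 3 * ((19 * Fintype.card α + 180) / 36)) *
          (Fintype.card α : ℚ) ^ ((Fintype.card α : ℤ) - 7))) := by
  rw [sum_congr rfl fun x _ => sum_comm, sum_comm, sum_congr rfl fun z hz =>
    sum_tripleCount_common_pair_of_notMem h hm (mem_compl.1 hz), sum_const, nsmul_eq_mul,
    cast_card_compl_of_nodup h]
  ring

lemma sum_tripleCount_same_support :
    ∑ x ∈ ({a, b, c} : Finset α), ∑ y ∈ ({a, b, c} : Finset α), ∑ z ∈ ({a, b, c} : Finset α),
        tripleCount m a b c x y z =
      3 * (m.factorial * (3 / 4 * ((Fintype.card α : ℚ) ^ 2 + 13 * Fintype.card α + 60) *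
        (Fintype.card α : ℚ) ^ ((Fintype.card α : ℤ) - 7))) := by
  have same : tripleCount m a b c a b c = 0 := by
    rw [tripleCount_of_nodup h, coverCount_self hm h]
  have inverse : tripleCount m a b c c b a = m.factorial * (3 / 4 *
      ((Fintype.card α : ℚ) ^ 2 + 13 * Fintype.card α + 60) *
        (Fintype.card α : ℚ) ^ ((Fintype.card α : ℤ) - 7)) := by
    rw [tripleCount_of_nodup (by grind), coverCount_inverse h hm]
  have left (x y : α) : tripleCount m a b c x x y = 0 := tripleCount_of_not_nodup (by grind)
  have right (x y : α) : tripleCount m a b c x y y = 0 := tripleCount_of_not_nodup (by grind)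
  have outer (x y : α) : tripleCount m a b c x y x = 0 := tripleCount_of_not_nodup (by grind)
  simp only [sum_of_nodup h, left, right, outer]
  rw [tripleCount_rotate m a b c a b c, tripleCount_rotate m a b c c b a,
    ← tripleCount_rotate m a b c c a b, ← tripleCount_rotate m a b c a c b, same, inverse]
  ring

theorem sum_tripleCount : ∑ x, ∑ y, ∑ z, tripleCount m a b c x y z =
    m.factorial * (27 / 4 * (27 * (Fintype.card α : ℚ) ^ 2 - 137 * Fintype.card α + 180)) *
        (Fintype.card α : ℚ) ^ ((Fintype.card α : ℤ) - 6) := by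
  have hn : (Fintype.card α : ℚ) ≠ 0 := by positivity
  rw [sum_eq_of_cyclic (tripleCount_rotate m a b c) {a, b, c}, sum_tripleCount_disjoint h hm,
    sum_tripleCount_common_point h hm, sum_tripleCount_common_pair h hm,
    sum_tripleCount_same_support h hm,
    show (Fintype.card α : ℤ) - 6 = Fintype.card α - 7 + 1 by ring, zpow_add_one₀ hn]
  norm_num [cycleWeight, mapCoeff]
  ring

end TripleCounts

lemma cast_factorial_eq_of_three_le {n : ℕ} (hn : 3 ≤ n) :
    (n.factorial : ℚ) = n * (n - 1) * (n - 2) * (n - 3).factorial := by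
  obtain ⟨k, rfl⟩ := Nat.exists_eq_add_of_le' hn
  rw [Nat.add_sub_cancel, Nat.factorial_succ, Nat.factorial_succ, Nat.factorial_succ]
  push_cast
  ring

end HurwitzNumber

open HurwitzNumber in
theorem hurwitz_number_2_1_2_1_general {α : Type*} [Fintype α] [DecidableEq α] {m : ℕ}
    (hm : m + 6 = 2 * Fintype.card α) :
    (Nat.card {p : Perm α × Perm α × (Fin m → Perm α) //
        p.1.cycleType = {3} ∧
        p.2.1.cycleType = {3} ∧
        (∀ i, (p.2.2 i).IsSwap) ∧
        p.1 * p.2.1 * (List.ofFn p.2.2).prod = 1 ∧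
        (∀ x y : α, ∃ g ∈ Subgroup.closure ({p.1, p.2.1} ∪ Set.range p.2.2), g x = y)} : ℚ) =
      ((Fintype.card α).factorial : ℚ) *
        ((3 / 4) * (27 * (Fintype.card α : ℚ) ^ 2 - 137 * (Fintype.card α : ℚ) + 180)) *
        ((m.factorial : ℚ) / ((Fintype.card α - 3).factorial : ℚ)) *
        (Fintype.card α : ℚ) ^ ((Fintype.card α : ℤ) - 6) := by
  have : Nonempty α := Fintype.card_pos_iff.1 (by omega)
  have hn : 3 ≤ Fintype.card α := by omega
  refine mul_left_cancel₀ (by norm_num : (9 : ℚ) ≠ 0) ?_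
  rw [nine_mul_natCard, Finset.sum_congr rfl fun a _ => Finset.sum_congr rfl fun b _ =>
    Finset.sum_congr rfl fun c _ => ite_congr rfl (fun habc => sum_tripleCount habc hm)
      fun _ => rfl, sum_ite_nodup, Finset.card_univ, cast_factorial_eq_of_three_le hn]
  field_simp
  ring

/-- Theorem 1.2, first formula. Genus-zero Hurwitz number h_{2^1,2^1}: two branch points of cycle type (3,1^{n-3}) and 2n-6 transpositions; h_{2^1,2^1} = (3/4)(27n^2-137n+180)((2n-6)!/(n-3)!) n^(n-6). -/
theorem hurwitz_number_2_1_2_1 (n : ℕ) (hn : 3 ≤ n) :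
    (Nat.card {p : Perm (Fin n) × Perm (Fin n) × (Fin (2 * n - 6) → Perm (Fin n)) //
        p.1.cycleType = {3} ∧
        p.2.1.cycleType = {3} ∧
        (∀ i, (p.2.2 i).IsSwap) ∧
        p.1 * p.2.1 * (List.ofFn p.2.2).prod = 1 ∧
        (∀ x y : Fin n, ∃ g ∈ Subgroup.closure ({p.1, p.2.1} ∪ Set.range p.2.2),
          g x = y)} : ℚ) =
      (n.factorial : ℚ) * ((3 / 4) * (27 * (n : ℚ) ^ 2 - 137 * (n : ℚ) + 180)) *
        (((2 * n - 6).factorial : ℚ) / ((n - 3).factorial : ℚ)) *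
        (n : ℚ) ^ ((n : ℤ) - 6) := by
  simpa only [Fintype.card_fin] using hurwitz_number_2_1_2_1_general (α := Fin n)
    (m := 2 * n - 6) (by rw [Fintype.card_fin]; omega)
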